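/- arXiv:2103.07498 — 2 statements merged into one kernel-verified Lean document; each statement's English description precedes it below -/
import Mathlib

section
/- For every integer n ≥ 2, Σ_k k(k−1) · D_{n,k} = (n−2) · Σ_k k(k−1) · D_{n−1,k} + (2n−4) · Σ_k k · D_{n−1,k} + (−1)^n (n−1)(n−2), where D_{m,k} is the number of derangements of {1,…,m} with exactly k descents. -/
open Finset

/-- The number of descents of a permutation of `Fin n`:
positions `i` with `i+1 < n` and `π(i) > π(i+1)`. -/
def descents {n : ℕ} (π : Equiv.Perm (Fin n)) : ℕ :=
  (Finset.univ.filter fun i : Fin n =>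
    ∃ h : (i : ℕ) + 1 < n, π ⟨(i : ℕ) + 1, h⟩ < π i).card

/-- The derangements of the symmetric group `S_n`. -/
def derangementSet (n : ℕ) : Finset (Equiv.Perm (Fin n)) :=
  Finset.univ.filter fun π => ∀ i, π i ≠ i

/-- `D_{n,k}`: the number of derangements of `{1,…,n}` with exactly `k` descents. -/
def derDesNat (n k : ℕ) : ℕ :=
  ((derangementSet n).filter fun π => descents π = k).card

open Equiv in
lemma card_agree {n : ℕ} (g : Perm (Fin n)) :
    ((derangementSet n).filter fun π => ∀ a, g a ≠ a → π a = g a).card =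
      numDerangements (n - g.support.card) := by
  classical
  have h1 : numDerangements (n - g.support.card) =
      Fintype.card (derangements (Subtype fun a => g a = a)) := by
    rw [card_derangements_eq_numDerangements]
    congr 1
    rw [Fintype.card_subtype]
    have := Finset.card_filter_add_card_filter_not (s := (univ : Finset (Fin n)))
      (fun a => g a = a)
    have h2 : g.support = univ.filter fun a => ¬ g a = a := by ext; simp
    rw [h2]
    simp only [card_univ, Fintype.card_fin] at this
    omega
  rw [h1, Fintype.card_congr (derangements.subtypeEquiv _), Fintype.card_subtype]
  refine Finset.card_bij' (fun π _ => g⁻¹ * π) (fun π _ => g * π) ?_ ?_ ?_ ?_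
  · intro π hπ
    simp only [derangementSet, mem_filter, mem_univ, true_and, Function.mem_fixedPoints,
      Function.IsFixedPt, Perm.mul_apply, Perm.inv_eq_iff_eq] at hπ ⊢
    intro a
    constructor
    · intro h; exact (hπ.2 a h)
    · intro h h2
      rw [h2] at h
      exact hπ.1 a h
  · intro π hπ
    simp only [derangementSet, mem_filter, mem_univ, true_and, Function.mem_fixedPoints,
      Function.IsFixedPt, Perm.mul_apply] at hπ ⊢
    constructor
    · intro a h
      by_cases h2 : g a = a
      · have : π a = a := g.injective (h.trans h2.symm)
        exact (hπ a).2 this h2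
      · rw [(hπ a).1 h2] at h
        exact h2 h
    · intro a h
      rw [(hπ a).1 h]
  · intro π _; simp
  · intro π _; simp

lemma card_der (n : ℕ) : (derangementSet n).card = numDerangements n := by
  have := card_agree (1 : Equiv.Perm (Fin n))
  simpa using this

/-- sign of a descent -/
def eps {n : ℕ} (a b : Fin n) (π : Equiv.Perm (Fin n)) : ℤ := if π b < π a then 1 else -1

lemma conj_mem {n : ℕ} (g h π : Equiv.Perm (Fin n)) (hg : g * h = 1) (hπ : π ∈ derangementSet n) :
    g * π * h ∈ derangementSet n := by
  simp only [derangementSet, mem_filter, mem_univ, true_and, Equiv.Perm.mul_apply] at hπ ⊢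
  intro i hi
  apply hπ (h i)
  have h1 : ∀ x, g (h x) = x := fun x => by
    rw [← Equiv.Perm.mul_apply, hg]; rfl
  apply g.injective
  rw [hi, h1]

lemma pair_le {n : ℕ} (a b c d : Fin n) (h : a ≠ b ∧ a ≠ c ∧ a ≠ d ∧ b ≠ c ∧ b ≠ d ∧ c ≠ d) :
    4 ≤ n := by
  have := Finset.card_le_univ ({a, b, c, d} : Finset (Fin n))
  obtain ⟨h1, h2, h3, h4, h5, h6⟩ := h
  rw [Finset.card_insert_of_notMem, Finset.card_insert_of_notMem, Finset.card_insert_of_notMem] at this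
  all_goals simp_all

lemma sum_eps {n : ℕ} (a b : Fin n) (hab : (b : ℕ) = a + 1) :
    ∑ π ∈ derangementSet n, eps a b π = numDerangements (n - 2) := by
  have hne : a ≠ b := by intro h; subst h; omega
  rw [← Finset.sum_filter_add_sum_filter_not (derangementSet n)
    (fun π => ∀ x, Equiv.swap a b x ≠ x → π x = Equiv.swap a b x)]
  have hA : ∀ π : Equiv.Perm (Fin n), (∀ x, Equiv.swap a b x ≠ x → π x = Equiv.swap a b x) ↔
      (π a = b ∧ π b = a) := by
    intro π
    constructor
    · intro h
      have h1 := h a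
      have h2 := h b
      simp only [Equiv.swap_apply_left, Equiv.swap_apply_right] at h1 h2
      exact ⟨h1 hne.symm, h2 hne⟩
    · rintro ⟨h1, h2⟩ x hx
      by_cases hxa : x = a
      · subst hxa; simpa using h1
      by_cases hxb : x = b
      · subst hxb; simpa using h2
      exact absurd (Equiv.swap_apply_of_ne_of_ne hxa hxb) hx
  have h0 : ∑ π ∈ (derangementSet n).filter
      (fun π => ¬ ∀ x, Equiv.swap a b x ≠ x → π x = Equiv.swap a b x), eps a b π = 0 := by
    have key : ∀ π ∈ (derangementSet n).filter
      (fun π => ¬ ∀ x, Equiv.swap a b x ≠ x → π x = Equiv.swap a b x),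
      eps a b π + eps a b (Equiv.swap a b * π * Equiv.swap a b) = 0 := by
      intro π hπ
      rw [mem_filter, hA] at hπ
      simp only [derangementSet, mem_filter, mem_univ, true_and] at hπ
      have h1 := hπ.1 a
      have h2 := hπ.1 b
      have h3 := hπ.2
      have h4 : π a ≠ π b := fun h => hne (π.injective h)
      simp only [eps, Equiv.Perm.mul_apply, Equiv.swap_apply_left, Equiv.swap_apply_right]
      generalize π a = x at *
      generalize π b = y at *
      simp only [Equiv.swap_apply_def]
      grind
    refine Finset.sum_involution (fun π _ => Equiv.swap a b * π * Equiv.swap a b) key ?_ ?_ ?_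
    · intro π hπ hf h
      have := key π hπ
      rw [h] at this
      omega
    · intro π hπ
      simp only [mem_filter, hA] at hπ ⊢
      refine ⟨conj_mem _ _ _ (by simp) hπ.1, ?_⟩
      intro h
      apply hπ.2
      simp only [Equiv.Perm.mul_apply, Equiv.swap_apply_left, Equiv.swap_apply_right] at h
      rw [Equiv.swap_apply_eq_iff, Equiv.swap_apply_eq_iff] at h
      simp at h
      tauto
    · intro π _
      simp [mul_assoc]
  rw [h0, add_zero]
  have h1 := card_agree (Equiv.swap a b)
  rw [Equiv.Perm.card_support_swap hne] at h1
  rw [← h1, Finset.cast_card]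
  apply Finset.sum_congr rfl
  intro π hπ
  rw [mem_filter, hA] at hπ
  have : a < b := by rw [Fin.lt_def]; omega
  simp [eps, hπ.2.1, hπ.2.2, this]
lemma sum_cancel {α : Type*} [DecidableEq α] (s : Finset α) (f : α → ℤ) (φ : α → α)
    (h1 : ∀ x ∈ s, φ x ∈ s) (h2 : ∀ x, φ (φ x) = x) (h3 : ∀ x ∈ s, f x + f (φ x) = 0) :
    ∑ x ∈ s, f x = 0 := by
  refine Finset.sum_involution (fun x _ => φ x) h3 ?_ h1 (fun x _ => h2 x)
  intro x hx hf h
  have := h3 x hx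
  rw [h] at this
  omega

lemma sum_eps_far {n : ℕ} (a b c d : Fin n) (hab : (b : ℕ) = a + 1) (hcd : (d : ℕ) = c + 1)
    (hac : a ≠ c) (had : a ≠ d) (hbc : b ≠ c) :
    ∑ π ∈ derangementSet n, eps a b π * eps c d π = numDerangements (n - 4) := by
  have hne : a ≠ b := by intro h; subst h; omega
  have hne' : c ≠ d := by intro h; subst h; omega
  have hbd : b ≠ d := by intro h; apply hac; apply Fin.ext; rw [h] at hab; omega
  have inj : ∀ π : Equiv.Perm (Fin n), π a ≠ π b ∧ π a ≠ π c ∧ π a ≠ π d ∧ π b ≠ π c ∧ π b ≠ π d ∧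
      π c ≠ π d := by
    intro π; simp [π.injective.eq_iff, *]
  have sa : ∀ g : Fin n → Fin n, g = Equiv.swap a b → g a = b ∧ g b = a ∧ g c = c ∧ g d = d := by
    rintro g rfl
    exact ⟨by simp, by simp, Equiv.swap_apply_of_ne_of_ne hac.symm hbc.symm,
      Equiv.swap_apply_of_ne_of_ne had.symm hbd.symm⟩
  obtain ⟨sa1, sa2, sa3, sa4⟩ := sa _ rfl
  have sc1 : Equiv.swap c d a = a := Equiv.swap_apply_of_ne_of_ne hac had
  have sc2 : Equiv.swap c d b = b := Equiv.swap_apply_of_ne_of_ne hbc hbd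
  rw [← Finset.sum_filter_add_sum_filter_not (derangementSet n) (fun π => π a = b ∧ π b = a)]
  rw [← Finset.sum_filter_add_sum_filter_not ((derangementSet n).filter
    (fun π => π a = b ∧ π b = a)) (fun π => π c = d ∧ π d = c)]
  rw [← Finset.sum_filter_add_sum_filter_not ((derangementSet n).filter
    (fun π => ¬ (π a = b ∧ π b = a))) (fun π => (π c = a ∧ π d = b) ∨ (π c = b ∧ π d = a))]
  have e2 : ∑ π ∈ ((derangementSet n).filter
      (fun π => π a = b ∧ π b = a)).filter (fun π => ¬ (π c = d ∧ π d = c)),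
      eps a b π * eps c d π = 0 := by
    apply sum_cancel _ _ (fun π => Equiv.swap c d * π * Equiv.swap c d)
    · intro π hπ
      simp only [mem_filter] at hπ ⊢
      refine ⟨⟨conj_mem _ _ _ (by simp) hπ.1.1, ?_⟩, ?_⟩
      · simp [sc1, sc2, hπ.1.2]
      · intro h
        apply hπ.2
        simp only [Equiv.Perm.mul_apply, Equiv.swap_apply_left, Equiv.swap_apply_right] at h
        rw [Equiv.swap_apply_eq_iff, Equiv.swap_apply_eq_iff] at h
        simp at h
        tauto
    · intro π; simp [mul_assoc]
    · intro π hπ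
      simp only [derangementSet, mem_filter, mem_univ, true_and] at hπ
      have h1 := hπ.1.1 c
      have h2 := hπ.1.1 d
      obtain ⟨i1, i2, i3, i4, i5, i6⟩ := inj π
      have h5 := hπ.1.2
      have h6 := hπ.2
      simp only [eps, Equiv.Perm.mul_apply, Equiv.swap_apply_left, Equiv.swap_apply_right, sc1, sc2]
      rw [h5.1, h5.2, sc1, sc2]
      rw [h5.1, h5.2] at *
      clear hπ inj
      generalize π c = x at *
      generalize π d = y at *
      simp only [Equiv.swap_apply_def]
      grind
  have e3 : ∑ π ∈ ((derangementSet n).filter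
      (fun π => ¬ (π a = b ∧ π b = a))).filter
        (fun π => (π c = a ∧ π d = b) ∨ (π c = b ∧ π d = a)),
      eps a b π * eps c d π = 0 := by
    apply sum_cancel _ _ (fun π => π * Equiv.swap c d)
    · intro π hπ
      simp only [derangementSet, mem_filter, mem_univ, true_and] at hπ ⊢
      refine ⟨⟨?_, ?_⟩, ?_⟩
      · intro i
        have := hπ.1.1 i
        rw [Equiv.Perm.mul_apply, Equiv.swap_apply_def]
        split_ifs <;> grind
      · simpa [sc1, sc2] using hπ.1.2
      · simp only [Equiv.Perm.mul_apply, Equiv.swap_apply_left, Equiv.swap_apply_right]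
        tauto
    · intro π; simp [mul_assoc]
    · intro π hπ
      obtain ⟨i1, i2, i3, i4, i5, i6⟩ := inj π
      simp only [eps, Equiv.Perm.mul_apply, Equiv.swap_apply_left, Equiv.swap_apply_right, sc1, sc2]
      grind
  have e4 : ∑ π ∈ ((derangementSet n).filter
      (fun π => ¬ (π a = b ∧ π b = a))).filter
        (fun π => ¬ ((π c = a ∧ π d = b) ∨ (π c = b ∧ π d = a))),
      eps a b π * eps c d π = 0 := by
    apply sum_cancel _ _ (fun π => Equiv.swap a b * π * Equiv.swap a b)
    · intro π hπ
      simp only [mem_filter] at hπ ⊢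
      refine ⟨⟨conj_mem _ _ _ (by simp) hπ.1.1, ?_⟩, ?_⟩
      · intro h
        apply hπ.1.2
        simp only [Equiv.Perm.mul_apply, Equiv.swap_apply_left, Equiv.swap_apply_right] at h
        rw [Equiv.swap_apply_eq_iff, Equiv.swap_apply_eq_iff] at h
        simp at h
        tauto
      · intro h
        apply hπ.2
        simp only [Equiv.Perm.mul_apply, sa3, sa4, Equiv.swap_apply_eq_iff, sa1, sa2] at h
        tauto
    · intro π; simp [mul_assoc]
    · intro π hπ
      simp only [derangementSet, mem_filter, mem_univ, true_and] at hπ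
      have h1 := hπ.1.1 a
      have h2 := hπ.1.1 b
      obtain ⟨i1, i2, i3, i4, i5, i6⟩ := inj π
      have h5 := hπ.1.2
      have h6 := hπ.2
      have k1 : eps a b (Equiv.swap a b * π * Equiv.swap a b) = - eps a b π := by
        simp only [eps, Equiv.Perm.mul_apply, sa1, sa2]
        clear hπ inj h6
        generalize π a = x at *
        generalize π b = y at *
        simp only [Equiv.swap_apply_def]
        grind
      have k2 : eps c d (Equiv.swap a b * π * Equiv.swap a b) = eps c d π := by
        simp only [eps, Equiv.Perm.mul_apply, sa3, sa4]
        clear hπ inj h5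
        generalize π c = x at *
        generalize π d = y at *
        simp only [Equiv.swap_apply_def]
        grind
      simp only [k1, k2]; ring
  rw [e2, e3, e4, add_zero, add_zero, add_zero]
  have hs : (Equiv.swap a b * Equiv.swap c d).support.card = 4 := by
    rw [Equiv.Perm.Disjoint.card_support_mul, Equiv.Perm.card_support_swap hne,
      Equiv.Perm.card_support_swap hne']
    rw [Equiv.Perm.disjoint_iff_disjoint_support, Equiv.Perm.support_swap hne,
      Equiv.Perm.support_swap hne']
    simp [*, Ne.symm]
  have h1 := card_agree (Equiv.swap a b * Equiv.swap c d)
  rw [hs] at h1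
  rw [← h1, Finset.cast_card, Finset.filter_filter]
  have hA : ∀ π : Equiv.Perm (Fin n), (∀ x, (Equiv.swap a b * Equiv.swap c d) x ≠ x → 
      π x = (Equiv.swap a b * Equiv.swap c d) x) ↔
      (π a = b ∧ π b = a) ∧ (π c = d ∧ π d = c) := by
    intro π
    constructor
    · intro h
      have h1 := h a
      have h2 := h b
      have h3 := h c
      have h4 := h d
      simp only [Equiv.Perm.mul_apply, Equiv.swap_apply_left, Equiv.swap_apply_right, sc1, sc2,
        sa3, sa4] at h1 h2 h3 h4
      exact ⟨⟨h1 hne.symm, h2 hne⟩, ⟨h3 hne'.symm, h4 hne'⟩⟩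
    · rintro ⟨⟨h1, h2⟩, h3, h4⟩ x hx
      simp only [Equiv.Perm.mul_apply] at hx ⊢
      by_cases hxa : x = a
      · subst hxa; rw [sc1, sa1, h1]
      by_cases hxb : x = b
      · subst hxb; rw [sc2, sa2, h2]
      by_cases hxc : x = c
      · subst hxc; rw [Equiv.swap_apply_left, sa4, h3]
      by_cases hxd : x = d
      · subst hxd; rw [Equiv.swap_apply_right, sa3, h4]
      rw [Equiv.swap_apply_of_ne_of_ne hxc hxd] at hx
      exact absurd (Equiv.swap_apply_of_ne_of_ne hxa hxb) hx
  simp only [hA]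
  apply Finset.sum_congr rfl
  intro π hπ
  rw [mem_filter] at hπ
  have : a < b := by rw [Fin.lt_def]; omega
  have : c < d := by rw [Fin.lt_def]; omega
  simp [eps, hπ.2.1.1, hπ.2.1.2, hπ.2.2.1, hπ.2.2.2, *]
lemma sum_conj {n : ℕ} (g h : Equiv.Perm (Fin n)) (hg : g * h = 1) (hh : h * g = 1)
    (f : Equiv.Perm (Fin n) → ℤ) :
    ∑ π ∈ derangementSet n, f (g * π * h) = ∑ π ∈ derangementSet n, f π := by
  refine Finset.sum_bij' (fun π _ => g * π * h) (fun π _ => h * π * g) ?_ ?_ ?_ ?_ ?_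
  · intro π hπ; exact conj_mem _ _ _ hg hπ
  · intro π hπ; exact conj_mem _ _ _ hh hπ
  · intro π _
    rw [show h * (g * π * h) * g = (h * g) * π * (h * g) by simp only [mul_assoc], hh]; simp
  · intro π _
    rw [show g * (h * π * g) * h = (g * h) * π * (g * h) by simp only [mul_assoc], hg]; simp
  · intro π _; rfl

def sg {n : ℕ} (x y : Fin n) : ℤ := if y < x then 1 else -1

def f3 {n : ℕ} (x y z : Fin n) : ℤ := sg x y * sg y z

lemma pointwise3 {n : ℕ} (a b c x y z : Fin n) (hab : (b : ℕ) = a + 1) (hbc : (c : ℕ) = b + 1)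
   (h1 : x ≠ a) (h2 : y ≠ b) (h3 : z ≠ c) (h4 : x ≠ y) (h5 : x ≠ z) (h6 : y ≠ z)
   (s t u v w : Fin n → Fin n)
   (hs : ∀ p, s p = if p = a then b else if p = b then a else p)
   (ht : ∀ p, t p = if p = b then c else if p = c then b else p)
   (hu : ∀ p, u p = if p = a then c else if p = c then a else p)
   (hv : ∀ p, v p = if p = a then b else if p = b then c else if p = c then a else p)
   (hw : ∀ p, w p = if p = a then c else if p = c then b else if p = b then a else p) :
   f3 x y z + f3 (s y) (s x) (s z) + f3 (t x) (t z) (t y) + f3 (u z) (u y) (u x)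
     + f3 (v z) (v x) (v y) + f3 (w y) (w z) (w x) =
   -2 - 4 * (if x = b ∧ y = c ∧ z = a then 1 else 0) - 4 * (if x = c ∧ y = a ∧ z = b then 1 else 0) := by
  have hab' : a < b := by rw [Fin.lt_def]; omega
  have hbc' : b < c := by rw [Fin.lt_def]; omega
  have tri : ∀ p : Fin n, p < a ∨ p = a ∨ p = b ∨ p = c ∨ c < p := by
    intro p; simp only [Fin.lt_def, Fin.ext_iff]; omega
  have lo : ∀ p : Fin n, p < a → s p = p ∧ t p = p ∧ u p = p ∧ v p = p ∧ w p = p := by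
    intro p hp
    have : p ≠ a ∧ p ≠ b ∧ p ≠ c := by simp only [Fin.lt_def, ne_eq, Fin.ext_iff] at *; omega
    simp [*]
  have hi : ∀ p : Fin n, c < p → s p = p ∧ t p = p ∧ u p = p ∧ v p = p ∧ w p = p := by
    intro p hp
    have : p ≠ a ∧ p ≠ b ∧ p ≠ c := by simp only [Fin.lt_def, ne_eq, Fin.ext_iff] at *; omega
    simp [*]
  have va : s a = b ∧ t a = a ∧ u a = c ∧ v a = b ∧ w a = c := by simp [*]; grind
  have vb : s b = a ∧ t b = c ∧ u b = b ∧ v b = c ∧ w b = a := by simp [*]; grind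
  have vc : s c = c ∧ t c = b ∧ u c = a ∧ v c = a ∧ w c = b := by simp [*]; grind
  clear hs ht hu hv hw
  have hL : ∀ p, s p = p ∧ t p = p ∧ u p = p ∧ v p = p ∧ w p = p →
     s p = p ∧ t p = p ∧ u p = p ∧ v p = p ∧ w p = p := fun p h => h
  rcases tri x with hx | rfl | rfl | rfl | hx <;> rcases tri y with hy | rfl | rfl | rfl | hy <;>
    rcases tri z with hz | rfl | rfl | rfl | hz <;>
  first
  | exact absurd rfl h1
  | exact absurd rfl h2
  | exact absurd rfl h3
  | exact absurd rfl h4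
  | exact absurd rfl h5
  | exact absurd rfl h6
  | (try have gx := lo _ hx
     try have gx := hi _ hx
     try have gy := lo _ hy
     try have gy := hi _ hy
     try have gz := lo _ hz
     try have gz := hi _ hz
     clear lo hi tri
     simp only [f3, sg, *]
     clear va vb vc
     grind)

lemma card_cyc {n : ℕ} (a b c : Fin n) (hab : a ≠ b) (hac : a ≠ c) (hbc : b ≠ c) :
    ((derangementSet n).filter fun π => π a = b ∧ π b = c ∧ π c = a).card =
      numDerangements (n - 3) := by
  have sa : Equiv.swap a b c = c := Equiv.swap_apply_of_ne_of_ne hac.symm hbc.symm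
  have sb : Equiv.swap b c a = a := Equiv.swap_apply_of_ne_of_ne hab hac
  have h3 : (Equiv.swap a b * Equiv.swap b c).support.card = 3 := by
    have := Equiv.Perm.isThreeCycle_swap_mul_swap_same hab.symm hbc hac
    rw [Equiv.swap_comm a b]
    exact this.card_support
  have h1 := card_agree (Equiv.swap a b * Equiv.swap b c)
  rw [h3] at h1
  rw [← h1]
  congr 1
  apply Finset.filter_congr
  intro π _
  constructor
  · rintro ⟨h1, h2, h3⟩ x hx
    simp only [Equiv.Perm.mul_apply] at hx ⊢
    by_cases hxa : x = a
    · subst hxa; rw [sb, Equiv.swap_apply_left, h1]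
    by_cases hxb : x = b
    · subst hxb; rw [Equiv.swap_apply_left, sa, h2]
    by_cases hxc : x = c
    · subst hxc; rw [Equiv.swap_apply_right, Equiv.swap_apply_right, h3]
    rw [Equiv.swap_apply_of_ne_of_ne hxb hxc] at hx
    exact absurd (Equiv.swap_apply_of_ne_of_ne hxa hxb) hx
  · intro h
    have h1 := h a
    have h2 := h b
    have h3 := h c
    simp only [Equiv.Perm.mul_apply, Equiv.swap_apply_left, Equiv.swap_apply_right, sa, sb] at h1 h2 h3
    exact ⟨h1 hab.symm, h2 hbc.symm, h3 hac⟩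

lemma sum_eps_adj {n : ℕ} (a b c : Fin n) (hab : (b : ℕ) = a + 1) (hbc : (c : ℕ) = b + 1) :
    3 * ∑ π ∈ derangementSet n, eps a b π * eps b c π =
      - (numDerangements n : ℤ) - 4 * numDerangements (n - 3) := by
  have h1 : a ≠ b := by rw [ne_eq, Fin.ext_iff]; omega
  have h2 : a ≠ c := by rw [ne_eq, Fin.ext_iff]; omega
  have h3 : b ≠ c := by rw [ne_eq, Fin.ext_iff]; omega
  set f : Equiv.Perm (Fin n) → ℤ := fun π => f3 (π a) (π b) (π c) with hf
  have hfe : ∀ π, eps a b π * eps b c π = f π := fun π => rfl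
  simp only [hfe]
  set s := Equiv.swap a b with hs
  set t := Equiv.swap b c with ht
  set u := Equiv.swap a c with hu
  have ss : s * s = 1 := by simp [s]
  have tt : t * t = 1 := by simp [t]
  have uu : u * u = 1 := by simp [u]
  have vw : (s * t) * (t * s) = 1 := by
    rw [mul_assoc, ← mul_assoc t, tt, one_mul, ss]
  have wv : (t * s) * (s * t) = 1 := by
    rw [mul_assoc, ← mul_assoc s, ss, one_mul, tt]
  have es := sum_conj s s ss ss f
  have et := sum_conj t t tt tt f
  have eu := sum_conj u u uu uu f
  have ev := sum_conj (s * t) (t * s) vw wv f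
  have ew := sum_conj (t * s) (s * t) wv vw f
  have key : ∑ π ∈ derangementSet n, (f π + f (s * π * s) + f (t * π * t) + f (u * π * u) +
      f ((s * t) * π * (t * s)) + f ((t * s) * π * (s * t))) =
      ∑ π ∈ derangementSet n, (-2 - 4 * (if π a = b ∧ π b = c ∧ π c = a then (1 : ℤ) else 0)
        - 4 * (if π a = c ∧ π c = b ∧ π b = a then 1 else 0)) := by
    apply Finset.sum_congr rfl
    intro π hπ
    simp only [derangementSet, mem_filter, mem_univ, true_and] at hπ
    have P := pointwise3 a b c (π a) (π b) (π c) hab hbc (hπ a) (hπ b) (hπ c)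
      (by simpa using h1) (by simpa using h2) (by simpa using h3) s t u (s * t : Equiv.Perm (Fin n))
      (t * s : Equiv.Perm (Fin n))
      (fun p => Equiv.swap_apply_def _ _ _) (fun p => Equiv.swap_apply_def _ _ _)
      (fun p => Equiv.swap_apply_def _ _ _)
      (fun p => by
        simp only [Equiv.Perm.mul_apply, hs, ht, Equiv.swap_apply_def]; grind)
      (fun p => by
        simp only [Equiv.Perm.mul_apply, hs, ht, Equiv.swap_apply_def]; grind)
    have sa : s a = b := by simp [s]
    have sb : s b = a := by simp [s]
    have sc : s c = c := Equiv.swap_apply_of_ne_of_ne h2.symm h3.symm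
    have ta : t a = a := Equiv.swap_apply_of_ne_of_ne h1 h2
    have tb : t b = c := by simp [t]
    have tc : t c = b := by simp [t]
    have ua : u a = c := by simp [u]
    have ub : u b = b := Equiv.swap_apply_of_ne_of_ne h1.symm h3
    have uc : u c = a := by simp [u]
    simp only [hf, Equiv.Perm.mul_apply, sa, sb, sc, ta, tb, tc, ua, ub, uc] at P ⊢
    rw [P]
    simp only [and_comm (a := π b = a)]
  simp only [Finset.sum_add_distrib, Finset.sum_sub_distrib, ← Finset.mul_sum, es, et, eu, ev, ew,
    Finset.sum_boole, card_cyc a b c h1 h2 h3, card_cyc a c b h2 h1 h3.symm, Finset.sum_const,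
    card_der] at key
  simp only [nsmul_eq_mul] at key
  linarith
def aX (i j : ℕ) (X Y Z : ℤ) : ℤ := if i = j then X else if i + 1 = j ∨ j + 1 = i then Y else Z

lemma count_row (m : ℕ) (X Y Z : ℤ) :
    ∑ j ∈ range (m+1), aX (m+1) j X Y Z = Y + m * Z := by
  rw [Finset.sum_range_succ, Finset.sum_congr rfl (g := fun _ => Z)]
  · simp [aX]; ring
  · intro j hj
    rw [mem_range] at hj
    simp only [aX]
    rw [if_neg (by omega), if_neg (by omega)]

lemma aX_comm (i j : ℕ) (X Y Z : ℤ) : aX i j X Y Z = aX j i X Y Z := by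
  simp only [aX]; grind

lemma count_pairs (m : ℕ) (X Y Z : ℤ) :
    ∑ i ∈ range (m+1), ∑ j ∈ range (m+1), aX i j X Y Z =
      (m+1) * X + 2 * m * Y + m * (m - 1) * Z := by
  induction m with
  | zero => simp [aX]
  | succ m ih =>
    rw [Finset.sum_range_succ, Finset.sum_congr rfl (fun i _ => Finset.sum_range_succ _ _),
      Finset.sum_add_distrib, ih, Finset.sum_range_succ (fun j => aX (m+1) j X Y Z), count_row,
      Finset.sum_congr rfl (fun i _ => aX_comm i _ X Y Z), count_row]
    simp only [aX, if_true]
    push_cast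
    ring
lemma descents_eq {m : ℕ} (π : Equiv.Perm (Fin (m+1))) :
    2 * (descents π : ℤ) = m + ∑ i : Fin m, eps i.castSucc i.succ π := by
  have h : descents π = (univ.filter fun i : Fin m => π i.succ < π i.castSucc).card := by
    unfold descents
    symm
    refine Finset.card_bij (fun i _ => i.castSucc) ?_ ?_ ?_
    · intro i hi
      simp only [mem_filter, mem_univ, true_and] at hi ⊢
      exact ⟨by simp, hi⟩
    · intro i _ j _ h; exact Fin.castSucc_injective _ h
    · intro i hi
      simp only [mem_filter, mem_univ, true_and] at hi
      obtain ⟨h, h2⟩ := hi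
      refine ⟨⟨i, by omega⟩, ?_, rfl⟩
      simp only [mem_filter, mem_univ, true_and]
      exact h2
  rw [h, Finset.card_filter]
  push_cast
  have : (m : ℤ) = ∑ i : Fin m, 1 := by simp
  rw [this, ← Finset.sum_add_distrib, Finset.mul_sum]
  apply Finset.sum_congr rfl
  intro i _
  simp only [eps]
  split_ifs <;> simp

lemma descents_lt {m : ℕ} (π : Equiv.Perm (Fin (m+1))) : descents π < m + 1 := by
  have h := descents_eq π
  have : ∑ i : Fin m, eps i.castSucc i.succ π ≤ ∑ i : Fin m, 1 := by
    apply Finset.sum_le_sum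
    intro i _
    simp only [eps]; split_ifs <;> simp
  simp at this
  omega

lemma sum_fib (m N : ℕ) (hN : m + 1 ≤ N) (F : ℕ → ℤ) :
    ∑ k ∈ range N, F k * derDesNat (m+1) k = ∑ π ∈ derangementSet (m+1), F (descents π) := by
  rw [← Finset.sum_fiberwise_of_maps_to (t := range N) (g := descents)]
  · apply Finset.sum_congr rfl
    intro k _
    rw [Finset.sum_congr rfl (g := fun _ => F k)]
    · simp [derDesNat, mul_comm]
    · intro π hπ
      rw [mem_filter] at hπ
      rw [hπ.2]
  · intro π _
    rw [mem_range]
    have := descents_lt π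
    omega

lemma sum_E (m : ℕ) : ∑ π ∈ derangementSet (m+2), ∑ i : Fin (m+1), eps i.castSucc i.succ π =
    (m + 1) * numDerangements m := by
  rw [Finset.sum_comm, Finset.sum_congr rfl (fun i _ => sum_eps i.castSucc i.succ (by simp))]
  simp

lemma sum_E2 (m : ℕ) :
    3 * ∑ π ∈ derangementSet (m+2), (∑ i : Fin (m+1), eps i.castSucc i.succ π)^2 =
    (m + 1) * (3 * numDerangements (m+2)) +
      2 * m * (- (numDerangements (m+2) : ℤ) - 4 * numDerangements (m - 1)) +
      m * (m - 1) * (3 * numDerangements (m - 2)) := by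
  rw [← count_pairs]
  simp only [pow_two, Finset.sum_mul_sum]
  rw [Finset.sum_comm, Finset.mul_sum, Finset.sum_range]
  apply Finset.sum_congr rfl
  intro i _
  rw [Finset.sum_comm, Finset.mul_sum, Finset.sum_range]
  apply Finset.sum_congr rfl
  intro j _
  unfold aX
  split_ifs with h1 h2
  · rw [← Fin.ext_iff] at h1
    subst h1
    rw [Finset.sum_congr rfl (g := fun _ => 1)]
    · simp [card_der]
    · intro π _; simp only [eps]; split_ifs <;> simp
  · rcases h2 with h2 | h2
    · have := sum_eps_adj i.castSucc i.succ j.succ (by simp) (by simp; omega)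
      have e : i.succ = j.castSucc := by ext; simp; omega
      rw [← e]
      exact this
    · have := sum_eps_adj j.castSucc j.succ i.succ (by simp) (by simp; omega)
      have e : j.succ = i.castSucc := by ext; simp; omega
      rw [← e, Finset.sum_congr rfl (fun π _ => mul_comm _ _)]
      exact this
  · rw [sum_eps_far i.castSucc i.succ j.castSucc j.succ (by simp) (by simp)
      (by simp [Fin.ext_iff]; omega) (by simp [Fin.ext_iff]; omega) (by simp [Fin.ext_iff]; omega)]
    simp

lemma S1_formula (m : ℕ) : 2 * ∑ π ∈ derangementSet (m+2), (descents π : ℤ) =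
    (m + 1) * (numDerangements (m+2) + numDerangements m) := by
  rw [Finset.mul_sum, Finset.sum_congr rfl (fun π _ => descents_eq π), Finset.sum_add_distrib,
    sum_E]
  simp [card_der]; ring

lemma S2_formula (m : ℕ) :
    12 * ∑ π ∈ derangementSet (m+2), (descents π : ℤ) * ((descents π : ℤ) - 1) =
    3 * (m + 1)^2 * (numDerangements (m+2) + 2 * numDerangements m) +
    ((m + 1) * (3 * numDerangements (m+2)) +
      2 * m * (- (numDerangements (m+2) : ℤ) - 4 * numDerangements (m - 1)) +
      m * (m - 1) * (3 * numDerangements (m - 2))) -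
    6 * (m + 1) * (numDerangements (m+2) + numDerangements m) := by
  have h : ∀ π ∈ derangementSet (m+2), 12 * ((descents π : ℤ) * ((descents π : ℤ) - 1)) =
      3 * (m + 1)^2 + 6 * (m + 1) * (∑ i : Fin (m+1), eps i.castSucc i.succ π) +
      3 * (∑ i : Fin (m+1), eps i.castSucc i.succ π)^2 - 12 * (descents π : ℤ) := by
    intro π _
    have := descents_eq π
    push_cast at this
    have e : ∑ i : Fin (m+1), eps i.castSucc i.succ π = 2 * (descents π : ℤ) - (m + 1) := by
      linarith
    rw [e]; ring
  rw [Finset.mul_sum, Finset.sum_congr rfl h, Finset.sum_sub_distrib, Finset.sum_add_distrib,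
    Finset.sum_add_distrib, ← Finset.mul_sum, ← Finset.mul_sum, ← Finset.mul_sum,
    ← Finset.mul_sum, sum_E, sum_E2]
  have := S1_formula m
  simp only [Finset.sum_const, card_der, nsmul_eq_mul]
  linear_combination (-6) * this

/-- `Σ_k k(k-1)·D_{n,k} = (n-2)·Σ_k k(k-1)·D_{n-1,k} + (2n-4)·Σ_k k·D_{n-1,k}
  + (-1)^n (n-1)(n-2)`. -/
theorem sum_sq_descents_derangements_recurrence (n : ℕ) (hn : 2 ≤ n) :
    ∑ k ∈ Finset.range n, (k : ℤ) * ((k : ℤ) - 1) * derDesNat n k =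
      ((n : ℤ) - 2) * ∑ k ∈ Finset.range n, (k : ℤ) * ((k : ℤ) - 1) * derDesNat (n - 1) k +
        (2 * (n : ℤ) - 4) * ∑ k ∈ Finset.range n, (k : ℤ) * derDesNat (n - 1) k +
        (-1) ^ n * ((n : ℤ) - 1) * ((n : ℤ) - 2) := by
  obtain ⟨m, rfl⟩ := Nat.exists_eq_add_of_le' hn
  rcases m with _ | m
  · simp [Finset.sum_range_succ]
  rw [sum_fib (m+2) _ (by omega) (fun k => (k : ℤ) * ((k : ℤ) - 1)),
    show m + 1 + 2 - 1 = (m + 1) + 1 by omega,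
    sum_fib (m+1) _ (by omega) (fun k => (k : ℤ) * ((k : ℤ) - 1)),
    sum_fib (m+1) _ (by omega) (fun k => (k : ℤ))]
  have a1 := S1_formula m
  have a2 := S2_formula m
  have a3 := S2_formula (m+1)
  rw [show m + 1 + 1 + 1 = m + 1 + 2 by ring, show m + 1 + 1 = m + 2 by ring]
  have r : ∀ k, (numDerangements (k + 1) : ℤ) = (k + 1) * (numDerangements k : ℤ) - (-1) ^ k :=
    numDerangements_succ
  generalize (∑ π ∈ derangementSet (m+1+2), (descents π : ℤ) * ((descents π : ℤ) - 1)) = A at *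
  generalize (∑ π ∈ derangementSet (m+2), (descents π : ℤ) * ((descents π : ℤ) - 1)) = B at *
  generalize (∑ π ∈ derangementSet (m+2), (descents π : ℤ)) = C at *
  rcases m with _ | _ | m
  · simp [numDerangements] at *; linarith
  · simp [numDerangements] at *; linarith
  · simp only [show m + 1 + 1 - 1 = m + 1 by omega, show m + 1 + 1 - 2 = m by omega,
      show m + 1 + 1 + 1 - 1 = m + 2 by omega, show m + 1 + 1 + 1 - 2 = m + 1 by omega] at a1 a2 a3
    have r0 := r m
    have r1 := r (m+1)
    have r2 := r (m+2)
    have r3 := r (m+3)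
    have r4 := r (m+4)
    simp only [show m + 1 + 1 = m + 2 by ring, show m + 1 + 2 = m + 3 by ring,
      show m + 2 + 1 = m + 3 by ring, show m + 2 + 2 = m + 4 by ring,
      show m + 3 + 1 = m + 4 by ring, show m + 3 + 2 = m + 5 by ring,
      show m + 4 + 1 = m + 5 by ring] at *
    have p : ∀ k, (-1 : ℤ)^(m + k) = (-1)^m * (-1)^k := fun k => pow_add _ _ _
    rw [p] at r1 r2 r3 r4 ⊢
    norm_num at r1 r2 r3 r4 ⊢
    generalize (-1 : ℤ)^m = σ at *
    rw [r4, r3, r2, r1, r0] at a3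
    rw [r3, r2, r1, r0] at a2
    rw [r3, r2, r1, r0] at a1
    push_cast at *
    generalize (m : ℤ) = M at *
    generalize (numDerangements m : ℤ) = D at *
    apply mul_left_cancel₀ (show (12 : ℤ) ≠ 0 by norm_num)
    linear_combination a3 - (M + 3) * a2 - 6 * (2 * M + 6) * a1
end

section
/- The number of descents of a uniformly random involution of S_n is asymptotically normal: for every x ∈ ℝ, P( (I_n − E[I_n]) / sqrt(Var(I_n)) ≤ x ) → Φ(x) as n → ∞, where I_n is the number of descents of a uniformly random involution of S_n and Φ is the standard normal CDF. -/
open Finset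

/-- The involutions of the symmetric group `S_n`. -/
def involutions (n : ℕ) : Finset (Equiv.Perm (Fin n)) :=
  Finset.univ.filter fun π => π * π = 1

/-- The standard normal cumulative distribution function. -/
noncomputable def stdNormalCDF (x : ℝ) : ℝ :=
  (Real.sqrt (2 * Real.pi))⁻¹ * ∫ t in Set.Iic x, Real.exp (-(t ^ 2) / 2)

/-- Mean number of descents of a uniformly random involution of `S_n`. -/
noncomputable def invMean (n : ℕ) : ℝ :=
  (∑ π ∈ involutions n, (descents π : ℝ)) / (involutions n).card

/-- Variance of the number of descents of a uniformly random involution of `S_n`. -/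
noncomputable def invVar (n : ℕ) : ℝ :=
  (∑ π ∈ involutions n, ((descents π : ℝ) - invMean n) ^ 2) / (involutions n).card

/-- `P((I_n - E I_n)/sqrt(Var I_n) ≤ x)` under the uniform measure on involutions. -/
noncomputable def invCDF (n : ℕ) (x : ℝ) : ℝ :=
  (((involutions n).filter fun π =>
      ((descents π : ℝ) - invMean n) / Real.sqrt (invVar n) ≤ x).card : ℝ) /
    (involutions n).card


section Comb
/-- swap-symmetric multisets of size n -/
def symS (r n : ℕ) : Finset (Multiset (Fin r × Fin r)) :=
  ((Finset.univ : Finset (Sym (Fin r × Fin r) n)).image (fun m : Sym (Fin r × Fin r) n => m.1)).filter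
    (fun m => m.map Prod.swap = m)

lemma mem_symS {r n : ℕ} {m : Multiset (Fin r × Fin r)} :
    m ∈ symS r n ↔ Multiset.card m = n ∧ m.map Prod.swap = m := by
  unfold symS
  simp only [Finset.mem_filter, Finset.mem_image, Finset.mem_univ, true_and]
  constructor
  · rintro ⟨⟨s, rfl⟩, h⟩
    exact ⟨s.2, h⟩
  · rintro ⟨h1, h2⟩
    exact ⟨⟨⟨m, h1⟩, rfl⟩, h2⟩

/-- weighted count -/
def symD (r n : ℕ) (x : Fin r × Fin r) : ℕ := ∑ m ∈ symS r n, m.count x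

lemma symD_diag (r n : ℕ) (i : Fin r) :
    symD r (n + 1) (i, i) = symD r n (i, i) + (symS r n).card := by
  have h1 : symD r (n+1) (i,i) = ∑ m ∈ (symS r (n+1)).filter (fun m => (i,i) ∈ m), m.count (i,i) := by
    unfold symD
    rw [Finset.sum_filter]
    refine Finset.sum_congr rfl fun m _ => ?_
    split_ifs with h
    · rfl
    · exact Multiset.count_eq_zero_of_notMem h
  have h2 : symD r n (i,i) + (symS r n).card = ∑ m ∈ symS r n, (m.count (i,i) + 1) := by
    rw [Finset.sum_add_distrib]; simp [symD]
  rw [h1, h2]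
  refine Finset.sum_bij' (fun m _ => m.erase (i,i)) (fun m _ => (i,i) ::ₘ m) ?_ ?_ ?_ ?_ ?_
  · intro m hm
    simp only [Finset.mem_filter, mem_symS] at hm ⊢
    obtain ⟨⟨h, h'⟩, h''⟩ := hm
    refine ⟨by rw [Multiset.card_erase_of_mem h'', h]; rfl, ?_⟩
    rw [Multiset.map_erase _ Prod.swap_injective, h']; rfl
  · intro m hm
    simp only [Finset.mem_filter, mem_symS] at hm ⊢
    simp [hm.1, hm.2]
  · intro m hm
    simp only [Finset.mem_filter, mem_symS] at hm
    exact Multiset.cons_erase hm.2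
  · intro m hm
    simp
  · intro m hm
    simp only [Finset.mem_filter, mem_symS] at hm
    have := Multiset.count_pos.2 hm.2
    rw [Multiset.count_erase_self]; omega

lemma symD_off (r n : ℕ) (x : Fin r × Fin r) (hx : x.1 ≠ x.2) :
    symD r (n + 2) x = symD r n x + (symS r n).card := by
  have hne : x.swap ≠ x := by
    intro h; apply hx; have := congrArg Prod.fst h; simpa using this.symm
  have h1 : symD r (n+2) x = ∑ m ∈ (symS r (n+2)).filter (fun m => x ∈ m), m.count x := by
    unfold symD
    rw [Finset.sum_filter]
    refine Finset.sum_congr rfl fun m _ => ?_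
    split_ifs with h
    · rfl
    · exact Multiset.count_eq_zero_of_notMem h
  have h2 : symD r n x + (symS r n).card = ∑ m ∈ symS r n, (m.count x + 1) := by
    rw [Finset.sum_add_distrib]; simp [symD]
  rw [h1, h2]
  have hsw : ∀ m : Multiset (Fin r × Fin r), m.map Prod.swap = m → x ∈ m → x.swap ∈ m.erase x := by
    intro m h hm
    rw [Multiset.mem_erase_of_ne hne, ← h]
    exact Multiset.mem_map_of_mem _ hm
  refine Finset.sum_bij' (fun m _ => (m.erase x).erase x.swap) (fun m _ => x ::ₘ x.swap ::ₘ m) ?_ ?_ ?_ ?_ ?_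
  · intro m hm
    simp only [Finset.mem_filter, mem_symS] at hm ⊢
    obtain ⟨⟨h, h'⟩, h''⟩ := hm
    refine ⟨by rw [Multiset.card_erase_of_mem (hsw m h' h''), Multiset.card_erase_of_mem h'', h]; rfl, ?_⟩
    rw [Multiset.map_erase _ Prod.swap_injective, Multiset.map_erase _ Prod.swap_injective, h', Prod.swap_swap,
      Multiset.erase_comm]
  · intro m hm
    simp only [Finset.mem_filter, mem_symS] at hm ⊢
    simp [hm.1, hm.2, Multiset.cons_swap]
  · intro m hm
    simp only [Finset.mem_filter, mem_symS] at hm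
    rw [Multiset.cons_erase (hsw m hm.1.2 hm.2), Multiset.cons_erase hm.2]
  · intro m hm
    simp
  · intro m hm
    simp only [Finset.mem_filter, mem_symS] at hm
    have := Multiset.count_pos.2 hm.2
    rw [Multiset.count_erase_of_ne hne.symm, Multiset.count_erase_self]; omega

lemma symD_sum (r n : ℕ) : ∑ x, symD r n x = n * (symS r n).card := by
  unfold symD
  rw [Finset.sum_comm]
  rw [Finset.sum_congr rfl (g := fun _ => n)]
  · simp [mul_comm]
  · intro m hm
    rw [mem_symS] at hm
    rw [← hm.1]
    exact Multiset.sum_count_eq_card (fun a _ => Finset.mem_univ a)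

lemma symS_rec (r n : ℕ) :
    (n + 2) * (symS r (n+2)).card = r * (symS r (n+1)).card + (r^2 + n) * (symS r n).card := by
  have key : ∑ x, symD r (n+2) x + r * (symS r n).card =
      ∑ x, symD r n x + r * (symS r (n+1)).card + r * (symS r n).card + r^2 * (symS r n).card := by
    have e : ∀ x : Fin r × Fin r, symD r (n+2) x + (if x.1 = x.2 then (symS r n).card else 0)
        = symD r n x + (if x.1 = x.2 then (symS r (n+1)).card else 0)
          + (if x.1 = x.2 then (symS r n).card else 0) + (symS r n).card := by
      rintro ⟨i, j⟩
      by_cases h : i = j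
      · subst h
        have h1 : symD r (n + 2) (i, i) = _ := symD_diag r (n+1) i
        have h2 := symD_diag r n i
        simp; omega
      · have := symD_off r n (i,j) h
        simp [h]; omega
    have := Finset.sum_congr (rfl : (Finset.univ : Finset (Fin r × Fin r)) = Finset.univ) (fun x _ => e x)
    have f : ∀ c : ℕ, ∑ x : Fin r × Fin r, (if x.1 = x.2 then c else 0) = r * c := by
      intro c
      rw [Fintype.sum_prod_type]
      simp
    simp only [Finset.sum_add_distrib, f] at this
    rw [this]
    simp [pow_two]
  rw [symD_sum, symD_sum] at key
  linarith

lemma symS_zero (r : ℕ) : (symS r 0).card = 1 := by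
  rw [Finset.card_eq_one]
  refine ⟨0, ?_⟩
  ext m
  simp only [mem_symS, Multiset.card_eq_zero, Finset.mem_singleton]
  constructor
  · exact fun h => h.1
  · rintro rfl; simp

lemma symS_one (r : ℕ) : (symS r 1).card = r := by
  have h := symD_sum r 1
  rw [one_mul] at h
  rw [← h, Fintype.sum_prod_type]
  have hD0 : ∀ x, symD r 0 x = 0 := by
    have := symD_sum r 0
    simpa using this
  have h2 : ∀ i j : Fin r, symD r 1 (i,j) = if i = j then 1 else 0 := by
    intro i j
    split_ifs with hij
    · subst hij; rw [symD_diag r 0, hD0, symS_zero]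
    · unfold symD
      refine Finset.sum_eq_zero fun m hm => ?_
      rw [mem_symS] at hm
      obtain ⟨⟨a, rfl⟩, h'⟩ := (Multiset.card_eq_one.1 hm.1).imp (fun _ h => h) |> fun h => (⟨h, hm.2⟩ : _ ∧ _)
      rw [Multiset.count_eq_zero]
      intro hmem
      rw [Multiset.mem_singleton] at hmem
      subst hmem
      simp at h'
      exact hij h'.2
  simp [h2]
end Comb

section Bij

lemma mono_eq_of_multiset {n : ℕ} {β : Type*} [LinearOrder β] {f g : Fin n → β}
    (hf : Monotone f) (hg : Monotone g)
    (h : (Finset.univ : Finset (Fin n)).val.map f = (Finset.univ : Finset (Fin n)).val.map g) : f = g := by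
  apply List.ofFn_injective
  have hp : (List.ofFn f).Perm (List.ofFn g) := by
    rw [← Multiset.coe_eq_coe]
    simpa [Fin.univ_val_map] using h
  exact hp.eq_of_pairwise' (List.pairwise_ofFn.2 fun i j hij => hf hij.le)
    (List.pairwise_ofFn.2 fun i j hij => hg hij.le)

/-- compatibility of a sequence with a permutation -/
def Compat {r n : ℕ} (π : Equiv.Perm (Fin n)) (a : Fin n → Fin r) : Prop :=
  ∀ i j, i < j → a i ≤ a j ∧ (a i = a j → π i < π j)

lemma Compat.mono {r n : ℕ} {π : Equiv.Perm (Fin n)} {a : Fin n → Fin r} (h : Compat π a) :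
    Monotone a := by
  intro i j hij
  rcases hij.lt_or_eq with h' | rfl
  · exact (h i j h').1
  · exact le_rfl

lemma Compat.lex {r n : ℕ} {π : Equiv.Perm (Fin n)} {a : Fin n → Fin r} (h : Compat π a) :
    Monotone (fun i => toLex (a i, a (π i))) := by
  intro i j hij
  rcases hij.lt_or_eq with h' | rfl
  · have := h i j h'
    rw [Prod.Lex.toLex_le_toLex]
    rcases this.1.lt_or_eq with h1 | h1
    · exact Or.inl h1
    · exact Or.inr ⟨h1, h.mono (this.2 h1).le⟩
  · exact le_rfl

open Classical in
/-- pairs -/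
noncomputable def pairsF (r n : ℕ) : Finset (Equiv.Perm (Fin n) × (Fin n → Fin r)) :=
  Finset.univ.filter fun p => p.1 * p.1 = 1 ∧ Compat p.1 p.2

lemma Compat.sort_eq {r n : ℕ} {π : Equiv.Perm (Fin n)} {a : Fin n → Fin r} (h : Compat π a)
    (hπ : π * π = 1) : π = Tuple.sort (a ∘ π) := by
  have e : ∀ i, π (π i) = i := fun i => by
    have := congrArg (fun f => f i) hπ; simpa using this
  rw [Tuple.eq_sort_iff]
  constructor
  · intro i j hij
    simpa [e] using h.mono hij
  · intro i j hij
    simpa [e] using (h i j hij).2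

lemma card_pairsF (r n : ℕ) : (pairsF r n).card = (symS r n).card := by
  classical
  refine Finset.card_bij (fun p _ => (Finset.univ : Finset (Fin n)).val.map
    (fun i => (p.2 i, p.2 (p.1 i)))) ?_ ?_ ?_
  · rintro ⟨π, a⟩ h
    simp only [pairsF, Finset.mem_filter, Finset.mem_univ, true_and] at h
    have e : ∀ i, π (π i) = i := fun i => by
      have := congrArg (fun f => f i) h.1; simpa using this
    rw [mem_symS]
    refine ⟨by simp, ?_⟩
    rw [Multiset.map_map]
    have : (Finset.univ : Finset (Fin n)).val = (Finset.univ : Finset (Fin n)).val.map π := by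
      have := congrArg Finset.val (Finset.map_univ_equiv π)
      simpa using this.symm
    conv_rhs => rw [this, Multiset.map_map]
    refine Multiset.map_congr rfl fun i _ => ?_
    simp [e]
  · rintro ⟨π, a⟩ h ⟨π', a'⟩ h' heq
    simp only [pairsF, Finset.mem_filter, Finset.mem_univ, true_and] at h h'
    have h1 : (fun i => toLex (a i, a (π i))) = (fun i => toLex (a' i, a' (π' i))) := by
      refine mono_eq_of_multiset h.2.lex h'.2.lex ?_
      have := congrArg (Multiset.map toLex) heq
      simpa [Multiset.map_map, Function.comp_def] using this
    have h2 : a = a' := by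
      funext i
      have := congrFun h1 i
      exact congrArg (fun x => (ofLex x).1) this
    have h3 : a ∘ π = a' ∘ π' := by
      funext i
      have := congrFun h1 i
      exact congrArg (fun x => (ofLex x).2) this
    have h4 : π = π' := by
      rw [h.2.sort_eq h.1, h'.2.sort_eq h'.1, h3]
    rw [h2, h4]
  · intro m hm
    rw [mem_symS] at hm
    obtain ⟨hc, hs⟩ := hm
    -- sorted enumeration
    obtain ⟨p, hp, hpm⟩ : ∃ p : Fin n → Fin r ×ₗ Fin r, Monotone p ∧
        (Finset.univ : Finset (Fin n)).val.map (fun i => ofLex (p i)) = m := by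
      obtain ⟨l, rfl⟩ := Quot.exists_rep m
      have hl : l.length = n := hc
      subst hl
      let q : Fin l.length → Fin r ×ₗ Fin r := fun i => toLex (l.get i)
      refine ⟨q ∘ Tuple.sort q, Tuple.monotone_sort q, ?_⟩
      have : (Finset.univ : Finset (Fin l.length)).val.map (Tuple.sort q) = (Finset.univ : Finset (Fin l.length)).val := by
        have := congrArg Finset.val (Finset.map_univ_equiv (Tuple.sort q))
        simpa using this
      have h2 : (Finset.univ : Finset (Fin l.length)).val.map (fun i => ofLex ((q ∘ Tuple.sort q) i))
        = ((Finset.univ : Finset (Fin l.length)).val.map (Tuple.sort q)).map (fun i => l.get i) := by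
        rw [Multiset.map_map]; rfl
      rw [h2, this, Fin.univ_val_map]
      simp
    let a : Fin n → Fin r := fun i => (ofLex (p i)).1
    let b : Fin n → Fin r := fun i => (ofLex (p i)).2
    have hab : ∀ i j, i ≤ j → a i < a j ∨ (a i = a j ∧ b i ≤ b j) := by
      intro i j hij
      have := hp hij
      rw [Prod.Lex.le_iff] at this
      exact this
    let σ := Tuple.sort b
    have hσ : Monotone (b ∘ σ) ∧ ∀ i j, i < j → b (σ i) = b (σ j) → σ i < σ j :=
      Tuple.eq_sort_iff.1 rfl
    have hq : Monotone (fun i => toLex (b (σ i), a (σ i))) := by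
      intro i j hij
      rcases hij.lt_or_eq with h' | rfl
      · rw [Prod.Lex.toLex_le_toLex]
        rcases (hσ.1 hij).lt_or_eq with h1 | h1
        · exact Or.inl h1
        · refine Or.inr ⟨h1, ?_⟩
          rcases hab _ _ (hσ.2 i j h' h1).le with h2 | h2
          · exact h2.le
          · exact h2.1.le
      · exact le_rfl
    have hpq : (fun i => toLex (b (σ i), a (σ i))) = p := by
      refine mono_eq_of_multiset hq hp ?_
      have h1 : (Finset.univ : Finset (Fin n)).val.map σ = (Finset.univ : Finset (Fin n)).val := by
        have := congrArg Finset.val (Finset.map_univ_equiv σ)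
        simpa using this
      have h2 : (Finset.univ : Finset (Fin n)).val.map (fun i => toLex (b (σ i), a (σ i)))
        = (((Finset.univ : Finset (Fin n)).val.map σ).map (fun i => (a i, b i))).map (fun x => toLex (Prod.swap x)) := by
        rw [Multiset.map_map, Multiset.map_map]; rfl
      have h3 : (Finset.univ : Finset (Fin n)).val.map (fun i => (a i, b i)) = m := hpm
      have h4 : (Finset.univ : Finset (Fin n)).val.map p = m.map toLex := by
        rw [← hpm, Multiset.map_map]; rfl
      rw [h2, h1, h3, h4]
      conv_rhs => rw [← hs, Multiset.map_map]
      rfl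
    have hbσ : ∀ i, b (σ i) = a i := fun i => congrArg (fun x => (ofLex x).1) (congrFun hpq i)
    have haσ : ∀ i, a (σ i) = b i := fun i => congrArg (fun x => (ofLex x).2) (congrFun hpq i)
    have ham : Monotone a := by
      intro i j hij
      rcases hab i j hij with h | h
      · exact h.le
      · exact h.1.le
    have hcomp : Compat σ a := by
      intro i j hij
      refine ⟨ham hij.le, fun h => hσ.2 i j hij ?_⟩
      rw [hbσ, hbσ, h]
    have hb' : ∀ i, b (σ⁻¹ i) = a i := by
      intro i
      have := haσ (σ⁻¹ i)
      simpa using this.symm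
    have hsi : ∀ i, σ (σ⁻¹ i) = i := fun i => by simp
    have hinv : σ⁻¹ = Tuple.sort b := by
      rw [Tuple.eq_sort_iff]
      refine ⟨fun i j hij => ?_, fun i j hij h => ?_⟩
      · show b (σ⁻¹ i) ≤ b (σ⁻¹ j)
        rw [hb', hb']; exact ham hij
      · rw [hb', hb'] at h
        by_contra hcon
        have hne : σ⁻¹ j ≠ σ⁻¹ i := fun h => hij.ne' (σ⁻¹.injective h)
        have hlt : σ⁻¹ j < σ⁻¹ i := lt_of_le_of_ne (not_lt.1 hcon) hne
        rcases (ham hlt.le).lt_or_eq with h1 | h1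
        · rw [← hbσ, ← hbσ] at h1
          simp only [hsi] at h1
          rcases hab i j hij.le with h2 | h2
          · exact h2.ne h
          · exact absurd h1 (not_lt.2 h2.2)
        · have := (hcomp _ _ hlt).2 h1
          simp only [hsi] at this
          exact absurd this (not_lt.2 hij.le)
    have hσσ : σ * σ = 1 := by
      have : σ⁻¹ = σ := hinv
      calc σ * σ = σ⁻¹ * σ := by rw [this]
        _ = 1 := by simp
    refine ⟨(σ, a), ?_, ?_⟩
    · simp only [pairsF, Finset.mem_filter, Finset.mem_univ, true_and]
      exact ⟨hσσ, hcomp⟩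
    · simp only [haσ]
      exact hpm
end Bij

section Count

/-- descent flag -/
def dflag {n : ℕ} (π : Equiv.Perm (Fin n)) (j : ℕ) : Prop :=
  ∃ (h : j + 1 < n), π ⟨j + 1, h⟩ < π ⟨j, Nat.lt_of_succ_lt h⟩

open Classical in
/-- number of non-descents before i -/
noncomputable def nd {n : ℕ} (π : Equiv.Perm (Fin n)) (i : ℕ) : ℕ :=
  ((Finset.range i).filter fun j => ¬ dflag π j).card

lemma nd_succ_of {n : ℕ} (π : Equiv.Perm (Fin n)) (i : ℕ) (h : dflag π i) : nd π (i+1) = nd π i := by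
  simp [nd, Finset.range_add_one, Finset.filter_insert, h]

lemma nd_succ_of_not {n : ℕ} (π : Equiv.Perm (Fin n)) (i : ℕ) (h : ¬ dflag π i) :
    nd π (i+1) = nd π i + 1 := by
  simp [nd, Finset.range_add_one, Finset.filter_insert, h]

lemma nd_le {n : ℕ} (π : Equiv.Perm (Fin n)) (i : ℕ) : nd π i ≤ i := by
  classical
  unfold nd
  exact (Finset.card_filter_le _ _).trans (by simp)

lemma nd_last {n : ℕ} (π : Equiv.Perm (Fin (n+1))) : nd π n + descents π = n := by
  classical
  have h : descents π = ((Finset.range n).filter fun j => dflag π j).card := by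
    unfold descents
    refine Finset.card_bij (fun i _ => (i : ℕ)) ?_ ?_ ?_
    · intro i hi
      simp only [Finset.mem_filter, Finset.mem_univ, true_and, Finset.mem_range] at hi ⊢
      obtain ⟨h, h'⟩ := hi
      exact ⟨by omega, h, h'⟩
    · intro i _ j _ h
      exact Fin.ext h
    · intro j hj
      simp only [Finset.mem_filter, Finset.mem_univ, true_and, Finset.mem_range] at hj ⊢
      obtain ⟨h, h', h''⟩ := hj
      exact ⟨⟨j, by omega⟩, ⟨h', h''⟩, rfl⟩
  unfold nd
  rw [h, add_comm, Finset.card_filter_add_card_filter_not]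
  simp

lemma compat_iff {r n : ℕ} (π : Equiv.Perm (Fin (n+1))) (a : Fin (n+1) → Fin r) :
    Compat π a ↔ StrictMono (fun i : Fin (n+1) => (a i : ℕ) + nd π i) := by
  rw [Fin.strictMono_iff_lt_succ]
  have key : ∀ i : Fin n, ((a i.castSucc : ℕ) + nd π (i.castSucc : Fin (n+1)) < a i.succ + nd π (i.succ : Fin (n+1))) ↔
      (a i.castSucc ≤ a i.succ ∧ (a i.castSucc = a i.succ → π i.castSucc < π i.succ)) := by
    intro i
    have hd : dflag π (i : ℕ) ↔ π i.succ < π i.castSucc := by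
      constructor
      · rintro ⟨h, h'⟩; exact h'
      · intro h; exact ⟨by omega, h⟩
    have hne : π i.castSucc ≠ π i.succ := fun h => by
      have := π.injective h
      exact absurd this (Fin.castSucc_lt_succ).ne
    simp only [Fin.val_castSucc, Fin.val_succ]
    by_cases h : dflag π (i : ℕ)
    · rw [nd_succ_of π i h]
      have := hd.1 h
      constructor
      · intro h1
        have : a i.castSucc < a i.succ := by rw [Fin.lt_def]; omega
        exact ⟨this.le, fun e => absurd e this.ne⟩
      · rintro ⟨h1, h2⟩
        have h3 : a i.castSucc ≠ a i.succ := fun e => absurd (h2 e) (not_lt.2 this.le)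
        have := lt_of_le_of_ne h1 h3
        rw [Fin.lt_def] at this; omega
    · rw [nd_succ_of_not π i h]
      have h3 : π i.castSucc < π i.succ := lt_of_le_of_ne (not_lt.1 (fun e => h (hd.2 e))) hne
      rw [Fin.le_def]
      constructor
      · intro h1; exact ⟨by omega, fun _ => h3⟩
      · rintro ⟨h1, _⟩; omega
  constructor
  · intro h i
    exact (key i).2 (h _ _ (Fin.castSucc_lt_succ))
  · intro h
    have h' := fun i => (key i).1 (h i)
    have hm : Monotone a := Fin.monotone_iff_le_succ.2 fun i => (h' i).1
    -- lex strict mono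
    have hs : StrictMono (fun i : Fin (n+1) => toLex (a i, π i)) := by
      rw [Fin.strictMono_iff_lt_succ]
      intro i
      rw [Prod.Lex.toLex_lt_toLex]
      rcases (h' i).1.lt_or_eq with h1 | h1
      · exact Or.inl h1
      · exact Or.inr ⟨h1, (h' i).2 h1⟩
    intro i j hij
    refine ⟨hm hij.le, fun e => ?_⟩
    have := hs hij
    simp only [Prod.Lex.toLex_lt_toLex] at this
    rcases this with h1 | h1
    · exact absurd e h1.ne
    · exact h1.2

open Classical in
lemma card_compat {r n : ℕ} (π : Equiv.Perm (Fin (n+1))) :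
    (Finset.univ.filter fun a : Fin (n+1) → Fin r => Compat π a).card = (r + nd π n).choose (n+1) := by
  have h0 : Fintype.card (Fin (n+1) ↪o Fin (r + nd π n)) = (r + nd π n).choose (n+1) := by
    rw [Fintype.card_eq_nat_card, Nat.card_congr Set.powersetCard.ofFinEmbEquiv, Set.powersetCard.card]
    simp
  rw [← h0, ← Fintype.card_subtype]
  have hnd : Monotone (nd π) := by
    refine monotone_nat_of_le_succ fun i => ?_
    by_cases h : dflag π i
    · rw [nd_succ_of _ _ h]
    · rw [nd_succ_of_not _ _ h]; omega
  refine Fintype.card_congr ⟨fun a => OrderEmbedding.ofStrictMono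
      (fun i => ⟨(a.1 i : ℕ) + nd π i, ?_⟩) ?_, fun b => ⟨fun i => ⟨(b i : ℕ) - nd π i, ?_⟩, ?_⟩, ?_, ?_⟩
  · have := hnd (show (i : ℕ) ≤ n by omega)
    have := (a.1 i).2
    omega
  · intro i j hij
    exact (compat_iff π a.1).1 a.2 hij
  · -- bound
    have hb : StrictMono (fun i => (b i : ℕ)) := fun i j hij => b.strictMono hij
    have hstep : ∀ k : ℕ, ∀ hk : k ≤ n, k ≤ b ⟨k, by omega⟩ := by
      intro k
      induction k with
      | zero => intro _; omega
      | succ k ih =>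
        intro hk
        have h1 := ih (by omega)
        have h2 : (b ⟨k, by omega⟩ : ℕ) < b ⟨k+1, by omega⟩ := hb (by simp)
        omega
    have hdown : ∀ k : ℕ, ∀ hk : k ≤ n, (b ⟨n - k, by omega⟩ : ℕ) < r + nd π (n - k) := by
      intro k
      induction k with
      | zero => intro _; exact (b _).2
      | succ k ih =>
        intro hk
        have h1 := ih (by omega)
        have e : n - k = (n - (k+1)) + 1 := by omega
        have h2 : (b ⟨n - (k+1), by omega⟩ : ℕ) < b ⟨n - k, by omega⟩ := hb (by simp only [Fin.mk_lt_mk]; omega)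
        have h3 : nd π (n - k) ≤ nd π (n - (k+1)) + 1 := by
          rw [e]
          by_cases h : dflag π (n - (k+1))
          · rw [nd_succ_of _ _ h]; omega
          · rw [nd_succ_of_not _ _ h]
        omega
    have h1 := hdown (n - i) (by omega)
    have e : n - (n - (i : ℕ)) = i := by omega
    simp only [e] at h1
    have h2 := hstep i (by omega)
    have h3 := nd_le π i
    have h1' : (b i : ℕ) < r + nd π i := h1
    have h2' : (i : ℕ) ≤ b i := h2
    omega
  · rw [compat_iff]
    have hb : StrictMono (fun i => (b i : ℕ)) := fun i j hij => b.strictMono hij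
    have hstep : ∀ k : ℕ, ∀ hk : k ≤ n, k ≤ b ⟨k, by omega⟩ := by
      intro k
      induction k with
      | zero => intro _; omega
      | succ k ih =>
        intro hk
        have h1 := ih (by omega)
        have h2 : (b ⟨k, by omega⟩ : ℕ) < b ⟨k+1, by omega⟩ := hb (by simp)
        omega
    have e : (fun i : Fin (n+1) => (b i : ℕ) - nd π i + nd π i) = fun i => (b i : ℕ) := by
      funext i
      have h2 : (i : ℕ) ≤ b i := hstep i (by omega)
      have h3 := nd_le π i
      omega
    simp only [e]
    exact hb
  · intro a
    ext i
    exact Nat.add_sub_cancel _ _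
  · intro b
    ext i
    have hb : StrictMono (fun i => (b i : ℕ)) := fun i j hij => b.strictMono hij
    have hstep : ∀ k : ℕ, ∀ hk : k ≤ n, k ≤ b ⟨k, by omega⟩ := by
      intro k
      induction k with
      | zero => intro _; omega
      | succ k ih =>
        intro hk
        have h1 := ih (by omega)
        have h2 : (b ⟨k, by omega⟩ : ℕ) < b ⟨k+1, by omega⟩ := hb (by simp)
        omega
    have h2 : (i : ℕ) ≤ b i := hstep i (by omega)
    have h3 := nd_le π i
    exact Nat.sub_add_cancel (h3.trans h2)

lemma main_count (r n : ℕ) :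
    ∑ π ∈ involutions (n+1), (r + n - descents π).choose (n+1) = (symS r (n+1)).card := by
  classical
  rw [← card_pairsF]
  have h1 : ∀ π : Equiv.Perm (Fin (n+1)), (r + n - descents π).choose (n+1)
      = (Finset.univ.filter fun a : Fin (n+1) → Fin r => Compat π a).card := by
    intro π
    rw [card_compat]
    have := nd_last π
    congr 1; omega
  simp only [h1]
  rw [← Finset.card_sigma]
  refine Finset.card_bij (fun p _ => (p.1, p.2)) ?_ ?_ ?_
  · rintro ⟨π, a⟩ h
    simpa [pairsF, involutions] using h
  · rintro ⟨π, a⟩ _ ⟨π', a'⟩ _ h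
    simp at h
    simp [h.1, h.2]
  · rintro ⟨π, a⟩ h
    exact ⟨⟨π, a⟩, by simpa [pairsF, involutions] using h, rfl⟩

lemma descents_le {n : ℕ} (π : Equiv.Perm (Fin (n+1))) : descents π ≤ n := by
  have := nd_last π; omega
end Count

section Mom
open Finset

/-- involution numbers -/
noncomputable def tN : ℕ → ℝ
  | 0 => 1
  | 1 => 1
  | (n+2) => tN (n+1) + (n+1) * tN n

/-- normalised count -/
noncomputable def aN (r n : ℕ) : ℝ := (n.factorial : ℝ) * (symS r n).card / (r:ℝ)^n

lemma aN_rec (r n : ℕ) (hr : 1 ≤ r) :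
    aN r (n+2) = aN r (n+1) + (n+1) * (1 + n / (r:ℝ)^2) * aN r n := by
  have h := symS_rec r n
  have h' : ((n:ℝ) + 2) * (symS r (n+2)).card = r * (symS r (n+1)).card + ((r:ℝ)^2 + n) * (symS r n).card := by
    exact_mod_cast h
  have hr' : (r:ℝ) ≠ 0 := by positivity
  unfold aN
  rw [Nat.factorial_succ (n+1), Nat.factorial_succ n]
  push_cast
  have e : ((n:ℝ) + 1 + 1) * ((n + 1) * n.factorial) * (symS r (n+2)).card
     = ((n:ℝ) + 1) * n.factorial * (((n:ℝ) + 2) * (symS r (n+2)).card) := by ring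
  rw [e, h']
  field_simp
  ring

lemma tN_pos (n : ℕ) : 0 < tN n := by
  induction n using Nat.twoStepInduction with
  | zero => simp [tN]
  | one => simp [tN]
  | more n h1 h2 => rw [tN]; positivity

lemma aN_zero (r : ℕ) : aN r 0 = 1 := by simp [aN, symS_zero]
lemma aN_one (r : ℕ) (hr : 1 ≤ r) : aN r 1 = 1 := by
  have hr' : (r:ℝ) ≠ 0 := by positivity
  simp [aN, symS_one, hr']

lemma aN_lower (r n : ℕ) (hr : 1 ≤ r) : tN n ≤ aN r n := by
  induction n using Nat.twoStepInduction with
  | zero => simp [tN, aN_zero]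
  | one => simp [tN, aN_one r hr]
  | more n h1 h2 =>
    rw [tN, aN_rec r n hr]
    have h3 := tN_pos n
    have h4 : (0:ℝ) ≤ n / (r:ℝ)^2 := by positivity
    have : ((n:ℝ)+1) * tN n ≤ (n+1) * (1 + n / (r:ℝ)^2) * aN r n := by
      rw [mul_assoc]
      gcongr
      nlinarith
    linarith

lemma aN_upper (r n : ℕ) (hr : 1 ≤ r) :
    aN r n ≤ tN n * ∏ j ∈ range n, (1 + (j:ℝ) / (r:ℝ)^2) := by
  induction n using Nat.twoStepInduction with
  | zero => simp [tN, aN_zero]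
  | one => simp [tN, aN_one r hr]
  | more n h1 h2 =>
    rw [aN_rec r n hr, tN]
    set P := ∏ j ∈ range n, (1 + (j:ℝ) / (r:ℝ)^2) with hP
    have hP0 : 0 ≤ P := Finset.prod_nonneg fun j _ => by positivity
    rw [Finset.prod_range_succ] at h2
    rw [Finset.prod_range_succ, Finset.prod_range_succ, ← hP]
    rw [← hP] at h2
    have t0 := tN_pos n
    have t1 := tN_pos (n+1)
    set u : ℝ := 1 + n / (r:ℝ)^2 with hu
    have hu0 : 0 ≤ u := by positivity
    set v : ℝ := 1 + ((n+1:ℕ):ℝ) / (r:ℝ)^2 with hv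
    have hv1 : 1 ≤ v := by rw [hv]; have : (0:ℝ) ≤ ((n+1:ℕ):ℝ) / (r:ℝ)^2 := by positivity
                           linarith
    calc aN r (n+1) + (n+1) * u * aN r n
        ≤ tN (n+1) * (P * u) + (n+1) * u * (tN n * P) := by gcongr
      _ = (tN (n+1) + (n+1) * tN n) * (P * u) * 1 := by ring
      _ ≤ (tN (n+1) + (n+1) * tN n) * (P * u) * v := by gcongr
      _ = _ := by ring

lemma prod_le_exp (r n : ℕ) :
    ∏ j ∈ range n, (1 + (j:ℝ) / (r:ℝ)^2) ≤ Real.exp ((n:ℝ)^2 / (r:ℝ)^2) := by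
  calc ∏ j ∈ range n, (1 + (j:ℝ) / (r:ℝ)^2) ≤ ∏ j ∈ range n, Real.exp ((n:ℝ) / (r:ℝ)^2) := by
        apply Finset.prod_le_prod
        · intro j _; positivity
        · intro j hj
          have h1 := Real.add_one_le_exp ((n:ℝ) / (r:ℝ)^2)
          have h2 : (j:ℝ) / (r:ℝ)^2 ≤ (n:ℝ) / (r:ℝ)^2 := by
            gcongr; exact (Finset.mem_range.1 hj).le
          linarith
    _ = _ := by
        rw [Finset.prod_const, Finset.card_range, ← Real.exp_nat_mul]
        congr 1; ring

lemma cast_desc (N m : ℕ) : ((N.descFactorial m : ℕ) : ℝ) = ∏ j ∈ range m, ((N:ℝ) - j) := by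
  induction m with
  | zero => simp
  | succ k ih =>
    rw [Nat.descFactorial_succ, Finset.prod_range_succ, ← ih]
    push_cast
    rcases le_or_gt k N with h | h
    · rw [Nat.cast_sub h]; ring
    · rw [Nat.descFactorial_eq_zero_iff_lt.2 h]; simp

lemma sum_prod_eq (r n : ℕ) (hr : 1 ≤ r) :
    ∑ π ∈ involutions (n+1), ∏ j ∈ range (n+1), (1 + ((n:ℝ) - descents π - j) * (1 / (r:ℝ))) = aN r (n+1) := by
  have hr' : (r:ℝ) ≠ 0 := by positivity
  unfold aN
  rw [← main_count]
  push_cast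
  rw [Finset.mul_sum, Finset.sum_div]
  refine Finset.sum_congr rfl fun π _ => ?_
  have hd := descents_le π
  rw [eq_div_iff (by positivity)]
  have h1 : (((n+1).factorial : ℕ) : ℝ) * ((r + n - descents π).choose (n+1) : ℕ)
      = (((r + n - descents π).descFactorial (n+1) : ℕ) : ℝ) := by
    rw [Nat.descFactorial_eq_factorial_mul_choose]; push_cast; ring
  rw [h1, cast_desc]
  have h2 : (r:ℝ)^(n+1) = ∏ j ∈ range (n+1), (r:ℝ) := by simp
  rw [h2, ← Finset.prod_mul_distrib]
  refine Finset.prod_congr rfl fun j _ => ?_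
  rw [Nat.cast_sub (by omega)]
  push_cast
  field_simp
  ring

lemma prod_expand (m : ℕ) (x : ℕ → ℝ) : ∃ C : ℝ, 0 ≤ C ∧ ∀ y : ℝ, 0 ≤ y → y ≤ 1 →
    |∏ j ∈ range m, (1 + x j * y) - (1 + (∑ j ∈ range m, x j) * y +
      (((∑ j ∈ range m, x j)^2 - ∑ j ∈ range m, x j ^2) / 2) * y^2)| ≤ C * y^3 := by
  induction m with
  | zero => exact ⟨0, le_rfl, fun y _ _ => by simp⟩
  | succ m ih =>
    obtain ⟨C, hC, h⟩ := ih
    set s := ∑ j ∈ range m, x j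
    set q := ∑ j ∈ range m, x j ^2
    refine ⟨C * (1 + |x m|) + |x m * ((s^2 - q)/2)|, by positivity, fun y hy hy1 => ?_⟩
    rw [Finset.prod_range_succ, Finset.sum_range_succ, Finset.sum_range_succ]
    set P := ∏ j ∈ range m, (1 + x j * y)
    have e : P * (1 + x m * y) - (1 + (s + x m) * y + (((s + x m)^2 - (q + x m ^2))/2) * y^2)
      = (P - (1 + s * y + ((s^2 - q)/2) * y^2)) * (1 + x m * y) + (x m * ((s^2 - q)/2)) * y^3 := by ring
    rw [e]
    have h1 : |1 + x m * y| ≤ 1 + |x m| := by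
      calc |1 + x m * y| ≤ |1| + |x m * y| := abs_add_le _ _
        _ ≤ 1 + |x m| * 1 := by
          rw [abs_mul, abs_one, abs_of_nonneg hy]; gcongr
        _ = _ := by ring
    calc _ ≤ |P - (1 + s * y + ((s^2 - q)/2) * y^2)| * |1 + x m * y| + |x m * ((s^2 - q)/2)| * y^3 := by
          refine (abs_add_le _ _).trans ?_
          rw [abs_mul, abs_mul (x m * _), abs_of_nonneg (by positivity : 0 ≤ y^3)]
      _ ≤ (C * y^3) * (1 + |x m|) + |x m * ((s^2 - q)/2)| * y^3 := by
          gcongr; exact h y hy hy1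
      _ = _ := by ring

open Filter Topology in
lemma extract_coeff (T E1 E2 C t M : ℝ) (q : ℕ → ℝ) (ht : 0 ≤ t) (hM : 0 ≤ M)
    (hq : ∀ r : ℕ, 1 ≤ r → |q r - (T + E1 * (1/(r:ℝ)) + E2 * (1/(r:ℝ))^2)| ≤ C * (1/(r:ℝ))^3)
    (hl : ∀ r : ℕ, 1 ≤ r → t ≤ q r)
    (hu : ∀ r : ℕ, 1 ≤ r → q r ≤ t * Real.exp (M / (r:ℝ)^2)) :
    T = t ∧ E1 = 0 ∧ 0 ≤ E2 ∧ E2 ≤ 2 * t * M := by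
  have hy : Tendsto (fun r : ℕ => 1/(r:ℝ)) atTop (𝓝 0) := tendsto_one_div_atTop_nhds_zero_nat
  -- upper bound
  have hu' : ∀ᶠ r : ℕ in atTop, q r ≤ t + 2 * t * M * (1/(r:ℝ))^2 := by
    have : Tendsto (fun r : ℕ => M * (1/(r:ℝ))^2) atTop (𝓝 (M * 0^2)) := (hy.pow 2).const_mul M
    rw [zero_pow two_ne_zero, mul_zero] at this
    filter_upwards [this.eventually (eventually_le_nhds (show (0:ℝ) < 1 by norm_num)), eventually_ge_atTop 1]
      with r h1 h2
    have h3 := hu r h2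
    have e : M / (r:ℝ)^2 = M * (1/(r:ℝ))^2 := by field_simp
    rw [e] at h3
    set z := M * (1/(r:ℝ))^2
    have hz : 0 ≤ z := by positivity
    have h4 := Real.abs_exp_sub_one_sub_id_le (x := z) (by rw [abs_of_nonneg hz]; exact h1)
    have h5 : Real.exp z ≤ 1 + 2 * z := by
      have := (abs_le.1 h4).2
      nlinarith
    have : 2 * t * M * (1/(r:ℝ))^2 = t * (2 * z) := by simp only [z]; ring
    rw [this]
    nlinarith
  have hl' : ∀ᶠ r : ℕ in atTop, t ≤ q r := by
    filter_upwards [eventually_ge_atTop 1] with r h using hl r h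
  have hq' : ∀ᶠ r : ℕ in atTop, |q r - (T + E1 * (1/(r:ℝ)) + E2 * (1/(r:ℝ))^2)| ≤ C * (1/(r:ℝ))^3 := by
    filter_upwards [eventually_ge_atTop 1] with r h using hq r h
  have hqt : Tendsto q atTop (𝓝 t) := by
    refine tendsto_of_tendsto_of_tendsto_of_le_of_le' tendsto_const_nhds ?_ hl' hu'
    have : Tendsto (fun r : ℕ => t + 2 * t * M * (1/(r:ℝ))^2) atTop (𝓝 (t + 2 * t * M * 0^2)) :=
      ((hy.pow 2).const_mul _).const_add _
    simpa using this
  have hqT : Tendsto q atTop (𝓝 T) := by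
    have h1 : Tendsto (fun r : ℕ => q r - (T + E1 * (1/(r:ℝ)) + E2 * (1/(r:ℝ))^2)) atTop (𝓝 0) := by
      refine squeeze_zero_norm' hq' ?_
      have : Tendsto (fun r : ℕ => C * (1/(r:ℝ))^3) atTop (𝓝 (C * 0^3)) := (hy.pow 3).const_mul _
      simpa using this
    have h2 : Tendsto (fun r : ℕ => T + E1 * (1/(r:ℝ)) + E2 * (1/(r:ℝ))^2) atTop (𝓝 (T + E1 * 0 + E2 * 0^2)) :=
      ((hy.const_mul _).const_add _).add ((hy.pow 2).const_mul _)
    have := h1.add h2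
    simpa using this
  have hT : T = t := tendsto_nhds_unique hqT hqt
  subst hT
  have hE1 : E1 = 0 := by
    have h1 : Tendsto (fun r : ℕ => (r:ℝ) * (q r - T)) atTop (𝓝 0) := by
      refine tendsto_of_tendsto_of_tendsto_of_le_of_le' (tendsto_const_nhds (x := (0:ℝ))) (h := fun r : ℕ => 2 * T * M * (1/(r:ℝ))) ?_ ?_ ?_
      · have := hy.const_mul (2 * T * M); simpa using this
      · filter_upwards [hl'] with r h
        have := sub_nonneg.2 h; positivity
      · filter_upwards [hu', eventually_ge_atTop 1] with r h h1
        have : (r:ℝ) ≠ 0 := by positivity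
        calc (r:ℝ) * (q r - T) ≤ r * (2 * T * M * (1/(r:ℝ))^2) := by gcongr; linarith
          _ = _ := by field_simp
    have h2 : Tendsto (fun r : ℕ => (r:ℝ) * (q r - T)) atTop (𝓝 E1) := by
      have h3 : Tendsto (fun r : ℕ => (r:ℝ) * (q r - T) - E1) atTop (𝓝 0) := by
        refine squeeze_zero_norm' (a := fun r : ℕ => C * (1/(r:ℝ))^2 + |E2| * (1/(r:ℝ))) ?_ ?_
        · filter_upwards [hq', eventually_ge_atTop 1] with r h h1
          have hr : (r:ℝ) ≠ 0 := by positivity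
          have e : (r:ℝ) * (q r - T) - E1 = r * (q r - (T + E1 * (1/(r:ℝ)) + E2 * (1/(r:ℝ))^2)) + E2 * (1/(r:ℝ)) := by
            field_simp; ring
          rw [e, Real.norm_eq_abs]
          refine (abs_add_le _ _).trans ?_
          rw [abs_mul, abs_mul, abs_of_nonneg (by positivity : (0:ℝ) ≤ r), abs_of_nonneg (by positivity : (0:ℝ) ≤ 1/(r:ℝ))]
          have : C * (1/(r:ℝ))^2 = r * (C * (1/(r:ℝ))^3) := by field_simp
          rw [this]; gcongr
        · have := ((hy.pow 2).const_mul C).add (hy.const_mul |E2|)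
          simpa using this
      have := h3.add_const E1
      simpa using this
    exact tendsto_nhds_unique h2 h1
  subst hE1
  have h2 : Tendsto (fun r : ℕ => (r:ℝ)^2 * (q r - T)) atTop (𝓝 E2) := by
    have h3 : Tendsto (fun r : ℕ => (r:ℝ)^2 * (q r - T) - E2) atTop (𝓝 0) := by
      refine squeeze_zero_norm' (a := fun r : ℕ => C * (1/(r:ℝ))) ?_ ?_
      · filter_upwards [hq', eventually_ge_atTop 1] with r h h1
        have hr : (r:ℝ) ≠ 0 := by positivity
        have e : (r:ℝ)^2 * (q r - T) - E2 = r^2 * (q r - (T + 0 * (1/(r:ℝ)) + E2 * (1/(r:ℝ))^2)) := by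
          field_simp; ring
        rw [e, Real.norm_eq_abs, abs_mul, abs_of_nonneg (by positivity : (0:ℝ) ≤ (r:ℝ)^2)]
        have : C * (1/(r:ℝ)) = r^2 * (C * (1/(r:ℝ))^3) := by field_simp
        rw [this]; gcongr
      · have := hy.const_mul C
        simpa using this
    have := h3.add_const E2
    simpa using this
  refine ⟨rfl, rfl, ge_of_tendsto h2 ?_, le_of_tendsto h2 ?_⟩
  · filter_upwards [hl'] with r h
    have := sub_nonneg.2 h; positivity
  · filter_upwards [hu', eventually_ge_atTop 1] with r h h1
    have : (r:ℝ) ≠ 0 := by positivity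
    calc (r:ℝ)^2 * (q r - T) ≤ r^2 * (2 * T * M * (1/(r:ℝ))^2) := by gcongr; linarith
      _ = _ := by field_simp

lemma sum_lin (m : ℕ) (c : ℝ) : ∑ j ∈ range m, (c - j) = m * c - m * (m - 1) / 2 := by
  induction m with
  | zero => simp
  | succ k ih => rw [Finset.sum_range_succ, ih]; push_cast; ring

lemma sum_sq (m : ℕ) (c : ℝ) : ∑ j ∈ range m, (c - j)^2 =
    m * (c - ((m:ℝ)-1)/2)^2 + m * ((m:ℝ)^2 - 1) / 12 := by
  have : ∑ j ∈ range m, (c - j)^2 = m * c^2 - c * (m * (m-1)) + m * (m-1) * (2 * m - 1) / 6 := by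
    induction m with
    | zero => simp
    | succ k ih => rw [Finset.sum_range_succ, ih]; push_cast; ring
  rw [this]; ring

lemma moments (n : ℕ) :
    ((involutions (n+1)).card : ℝ) = tN (n+1) ∧
    ∑ π ∈ involutions (n+1), ((n:ℝ)/2 - descents π) = 0 ∧
    0 ≤ ∑ π ∈ involutions (n+1), ((n+1) * n * ((descents π:ℝ) - n/2)^2 - (n+1) * (((n:ℝ)+1)^2 - 1) / 12) ∧
    ∑ π ∈ involutions (n+1), ((n+1) * n * ((descents π:ℝ) - n/2)^2 - (n+1) * (((n:ℝ)+1)^2 - 1) / 12)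
      ≤ 4 * tN (n+1) * (n+1)^2 := by
  choose C hC0 hC using fun π : Equiv.Perm (Fin (n+1)) => prod_expand (n+1) (fun j => (n:ℝ) - descents π - j)
  have h := extract_coeff ((involutions (n+1)).card : ℝ)
    (∑ π ∈ involutions (n+1), (∑ j ∈ range (n+1), ((n:ℝ) - descents π - j)))
    (∑ π ∈ involutions (n+1), (((∑ j ∈ range (n+1), ((n:ℝ) - descents π - j))^2 - ∑ j ∈ range (n+1), ((n:ℝ) - descents π - j)^2) / 2))
    (∑ π ∈ involutions (n+1), C π) (tN (n+1)) (((n+1:ℕ):ℝ)^2) (fun r => aN r (n+1)) (tN_pos _).le (by positivity)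
    (by
      intro r hr
      have hr1 : (1:ℝ) ≤ r := by exact_mod_cast hr
      rw [← sum_prod_eq r n hr, Finset.card_eq_sum_ones]
      push_cast
      rw [Finset.sum_mul, Finset.sum_mul, Finset.sum_mul, ← Finset.sum_add_distrib, ← Finset.sum_add_distrib,
        ← Finset.sum_sub_distrib]
      refine (Finset.abs_sum_le_sum_abs _ _).trans (Finset.sum_le_sum fun π _ => ?_)
      exact hC π (1/(r:ℝ)) (by positivity) (by rw [div_le_one (by linarith)]; exact hr1))
    (fun r hr => aN_lower r _ hr)
    (fun r hr => (aN_upper r _ hr).trans (mul_le_mul_of_nonneg_left (prod_le_exp r _) (tN_pos _).le))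
  obtain ⟨h1, h2, h3, h4⟩ := h
  have hn : ((n:ℝ)+1) ≠ 0 := by positivity
  simp only [sum_lin, sum_sq] at h2 h3 h4
  have e2 : ∀ π : Equiv.Perm (Fin (n+1)), (((n+1:ℕ):ℝ) * ((n:ℝ) - descents π) - ((n+1:ℕ):ℝ) * (((n+1:ℕ):ℝ) - 1) / 2)
     = (n+1) * ((n:ℝ)/2 - descents π) := by intro π; push_cast; ring
  simp only [e2] at h2 h3 h4
  have e3 : ∀ π : Equiv.Perm (Fin (n+1)), (((n:ℝ)+1) * ((n:ℝ)/2 - descents π)) ^ 2 - (((n+1:ℕ):ℝ) * ((n:ℝ) - descents π - (((n+1:ℕ):ℝ) - 1)/2)^2 + ((n+1:ℕ):ℝ) * (((n+1:ℕ):ℝ)^2 - 1) / 12)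
     = (n+1) * n * ((descents π:ℝ) - n/2)^2 - (n+1) * (((n:ℝ)+1)^2 - 1) / 12 := by intro π; push_cast; ring
  simp only [e3] at h3 h4
  rw [← Finset.sum_div] at h3 h4
  rw [← Finset.mul_sum] at h2
  refine ⟨h1, (mul_eq_zero.1 h2).resolve_left hn, by linarith, ?_⟩
  push_cast at h4
  linarith

lemma card_inv (n : ℕ) : ((involutions (n+1)).card : ℝ) = tN (n+1) := (moments n).1

lemma invMean_eq (n : ℕ) : invMean (n+1) = n/2 := by
  have h := (moments n).2.1
  have hc := card_inv n
  have hp := tN_pos (n+1)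
  unfold invMean
  rw [Finset.sum_sub_distrib, Finset.sum_const, nsmul_eq_mul] at h
  rw [div_eq_iff (by rw [hc]; exact hp.ne')]
  linarith

lemma invVar_bound (n : ℕ) (hn : 1 ≤ n) :
    ((n:ℝ)+2)/12 ≤ invVar (n+1) ∧ invVar (n+1) ≤ ((n:ℝ)+2)/12 + 8 := by
  obtain ⟨-, -, h3, h4⟩ := moments n
  have hc := card_inv n
  have hp := tN_pos (n+1)
  rw [Finset.sum_sub_distrib, ← Finset.mul_sum, Finset.sum_const, nsmul_eq_mul, hc] at h3 h4
  have hv : ∑ π ∈ involutions (n+1), ((descents π : ℝ) - n/2)^2 = invVar (n+1) * tN (n+1) := by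
    unfold invVar
    rw [invMean_eq, ← hc, div_mul_cancel₀]
    rw [hc]; exact hp.ne'
  rw [hv] at h3 h4
  have hn1 : (1:ℝ) ≤ n := by exact_mod_cast hn
  set V := invVar (n+1)
  set t := tN (n+1)
  have hk : 0 < ((n:ℝ)+1) * n * t := by positivity
  constructor
  · have : 0 ≤ ((n:ℝ)+1) * n * t * (V - (n+2)/12) := by
      calc (0:ℝ) ≤ _ := h3
        _ = _ := by ring
    have := nonneg_of_mul_nonneg_right this hk
    linarith
  · have : ((n:ℝ)+1) * n * t * (V - (n+2)/12) ≤ ((n:ℝ)+1) * n * t * 8 := by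
      calc ((n:ℝ)+1) * n * t * (V - (n+2)/12) = (↑n + 1) * ↑n * (V * t) - t * ((↑n + 1) * ((↑n + 1) ^ 2 - 1) / 12) := by ring
        _ ≤ 4 * t * (n+1)^2 := h4
        _ ≤ _ := by
          have : 0 ≤ ((n:ℝ)+1) * t * (n - 1) := by
            have : 0 ≤ (n:ℝ) - 1 := by linarith
            positivity
          nlinarith
    have := le_of_mul_le_mul_left this hk
    linarith
end Mom

section Lap
open Finset Filter Topology

lemma hasSum_gen (n : ℕ) (t : ℝ) (ht0 : 0 < t) (ht1 : t < 1) :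
    HasSum (fun R : ℕ => ((symS R (n+1)).card : ℝ) * t^R)
      (∑ π ∈ involutions (n+1), t^(descents π + 1) / (1 - t)^(n+2)) := by
  have h1 : ∀ π ∈ involutions (n+1), HasSum (fun R : ℕ => (((R + n - descents π).choose (n+1) : ℕ) : ℝ) * t^R)
      (t^(descents π + 1) / (1 - t)^(n+2)) := by
    intro π _
    have hd := descents_le π
    rw [← hasSum_nat_add_iff' (descents π + 1)]
    have h2 : ∑ i ∈ range (descents π + 1), (((i + n - descents π).choose (n+1) : ℕ) : ℝ) * t^i = 0 := by
      refine Finset.sum_eq_zero fun i hi => ?_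
      rw [Finset.mem_range] at hi
      rw [Nat.choose_eq_zero_of_lt (by omega)]; simp
    rw [h2, sub_zero]
    have h3 := hasSum_choose_mul_geometric_of_norm_lt_one (n+1) (r := t) (by
      rw [Real.norm_eq_abs, abs_of_pos ht0]; exact ht1)
    have h4 := h3.mul_left (t^(descents π + 1))
    have e1 : (fun j : ℕ => (((j + (descents π + 1) + n - descents π).choose (n+1) : ℕ) : ℝ) * t^(j + (descents π + 1))) = (fun j : ℕ => t^(descents π + 1) * (((j + (n+1)).choose (n+1) : ℕ) * t^j)) := by
      funext j
      have : j + (descents π + 1) + n - descents π = j + (n+1) := by omega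
      rw [this, pow_add]; ring
    have e2 : t^(descents π + 1) / (1 - t)^(n+2) = t^(descents π + 1) * (1 / (1 - t)^(n+1+1)) := by ring
    rw [e1, e2]
    exact h4
  have h2 := hasSum_sum h1
  convert h2 using 1
  funext R
  rw [← main_count, ← Finset.sum_mul]
  push_cast
  rfl

lemma gamma_int (m : ℕ) (l : ℝ) (hl : 0 < l) :
    MeasureTheory.IntegrableOn (fun x : ℝ => x^m * Real.exp (-(l*x))) (Set.Ioi 0) ∧
    ∫ x in Set.Ioi (0:ℝ), x^m * Real.exp (-(l*x)) = m.factorial / l^(m+1) := by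
  have h1 : ∫ x in Set.Ioi (0:ℝ), x^m * Real.exp (-(l*x)) = m.factorial / l^(m+1) := by
    have := Real.integral_rpow_mul_exp_neg_mul_Ioi (a := (m:ℝ)+1) (by positivity) hl
    rw [Real.Gamma_nat_eq_factorial] at this
    simp only [add_sub_cancel_right, Real.rpow_natCast] at this
    rw [this]
    have e : ((m:ℝ)+1) = ((m+1:ℕ):ℝ) := by push_cast; rfl
    rw [e, Real.rpow_natCast, one_div, inv_pow]
    field_simp
  refine ⟨MeasureTheory.Integrable.of_integral_ne_zero ?_, h1⟩
  rw [h1]; positivity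

lemma summable_g (m : ℕ) (l : ℝ) (hl : 0 < l) :
    Summable (fun R : ℕ => (R:ℝ)^m * Real.exp (-(l*R))) := by
  have := summable_pow_mul_geometric_of_norm_lt_one (R := ℝ) m (r := Real.exp (-l)) (by
    rw [Real.norm_eq_abs, abs_of_pos (Real.exp_pos _), Real.exp_lt_one_iff]; linarith)
  have e : (fun R : ℕ => (R:ℝ)^m * Real.exp (-(l*R))) = (fun R : ℕ => (R:ℝ)^m * Real.exp (-l)^R) := by
    funext R
    rw [← Real.exp_nat_mul]; congr 2; ring
  rw [e]; exact this

lemma S_bounds (m : ℕ) (hm : 1 ≤ m) (l : ℝ) (hl : 0 < l) :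
    Real.exp (-l) * (m.factorial / l^(m+1)) ≤ ∑' R : ℕ, (R:ℝ)^m * Real.exp (-(l*R)) ∧
    ∑' R : ℕ, (R:ℝ)^m * Real.exp (-(l*R)) ≤ Real.exp l * (m.factorial / l^(m+1)) := by
  obtain ⟨hI, hIv⟩ := gamma_int m l hl
  set g : ℕ → ℝ := fun R => (R:ℝ)^m * Real.exp (-(l*R)) with hg
  have hs : Summable g := summable_g m l hl
  set F : ℝ → ℝ := fun x => x^m * Real.exp (-(l*x)) with hF
  have hFc : Continuous F := by fun_prop
  have hlim : Tendsto (fun N : ℕ => ∫ x in (0:ℝ)..(N:ℝ), F x) atTop (𝓝 (m.factorial / l^(m+1))) := by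
    rw [← hIv]
    exact MeasureTheory.intervalIntegral_tendsto_integral_Ioi 0 hI tendsto_natCast_atTop_atTop
  have hsum : ∀ N : ℕ, ∫ x in (0:ℝ)..(N:ℝ), F x = ∑ k ∈ range N, ∫ x in (k:ℝ)..((k+1:ℕ):ℝ), F x := by
    intro N
    have := intervalIntegral.sum_integral_adjacent_intervals (f := F) (μ := MeasureTheory.volume)
      (a := fun k : ℕ => (k:ℝ)) (n := N) (fun k _ => hFc.intervalIntegrable _ _)
    rw [this]; simp
  have hlow : ∀ k : ℕ, Real.exp (-l) * g k ≤ ∫ x in (k:ℝ)..((k+1:ℕ):ℝ), F x := by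
    intro k
    have : Real.exp (-l) * g k = ∫ x in (k:ℝ)..((k+1:ℕ):ℝ), Real.exp (-l) * g k := by
      rw [intervalIntegral.integral_const]; simp
    rw [this]
    refine intervalIntegral.integral_mono_on (by push_cast; linarith) (by simp) (hFc.intervalIntegrable _ _) ?_
    intro x hx
    have h1 := hx.1
    have h2 := hx.2
    have h0 : 0 ≤ x := le_trans (by positivity) h1
    push_cast at h2
    simp only [hg, hF]
    calc Real.exp (-l) * ((k:ℝ)^m * Real.exp (-(l*k))) = (k:ℝ)^m * Real.exp (-(l*(k+1))) := by
          have : -(l * ((k:ℝ)+1)) = -l + -(l*k) := by ring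
          rw [this, Real.exp_add]; ring
      _ ≤ x^m * Real.exp (-(l*x)) := by gcongr
  have hup : ∀ k : ℕ, ∫ x in (k:ℝ)..((k+1:ℕ):ℝ), F x ≤ Real.exp l * g (k+1) := by
    intro k
    have : Real.exp l * g (k+1) = ∫ x in (k:ℝ)..((k+1:ℕ):ℝ), Real.exp l * g (k+1) := by
      rw [intervalIntegral.integral_const]; simp
    rw [this]
    refine intervalIntegral.integral_mono_on (by push_cast; linarith) (hFc.intervalIntegrable _ _) (by simp) ?_
    intro x hx
    have h1 := hx.1
    have h2 := hx.2
    have h0 : 0 ≤ x := le_trans (by positivity) h1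
    simp only [hg, hF]
    calc x^m * Real.exp (-(l*x)) ≤ ((k+1:ℕ):ℝ)^m * Real.exp (-(l*k)) := by gcongr
      _ = _ := by
          have : -(l * (k:ℝ)) = l + -(l*((k+1:ℕ):ℝ)) := by push_cast; ring
          rw [this, Real.exp_add]; ring
  constructor
  · have h1 : Tendsto (fun N : ℕ => ∑ k ∈ range N, Real.exp l * g (k+1)) atTop (𝓝 (Real.exp l * (∑' R, g R))) := by
      have h2 : HasSum g (∑' R, g R) := hs.hasSum
      rw [← hasSum_nat_add_iff' 1] at h2
      have h3 : ∑ i ∈ range 1, g i = 0 := by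
        simp [hg]; omega
      rw [h3, sub_zero] at h2
      exact (h2.mul_left _).tendsto_sum_nat
    have h2 := le_of_tendsto_of_tendsto' hlim h1 (fun N => by
      rw [hsum]; exact Finset.sum_le_sum fun k _ => hup k)
    calc _ ≤ Real.exp (-l) * (Real.exp l * ∑' R, g R) := by gcongr
      _ = _ := by rw [← mul_assoc, ← Real.exp_add]; simp
  · have h1 : Tendsto (fun N : ℕ => ∑ k ∈ range N, Real.exp (-l) * g k) atTop (𝓝 (Real.exp (-l) * (∑' R, g R))) :=
      (hs.hasSum.mul_left _).tendsto_sum_nat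
    have h2 := le_of_tendsto_of_tendsto' h1 hlim (fun N => by
      rw [hsum]; exact Finset.sum_le_sum fun k _ => hlow k)
    calc ∑' R, g R = Real.exp l * (Real.exp (-l) * ∑' R, g R) := by
          rw [← mul_assoc, ← Real.exp_add]; simp
      _ ≤ _ := by gcongr

/-- mean of exp(-l(d+1)) -/
noncomputable def Lp (n : ℕ) (l : ℝ) : ℝ :=
  (∑ π ∈ involutions (n+1), Real.exp (-(l * (descents π + 1)))) / (involutions (n+1)).card

lemma card_symS_zero (n : ℕ) : (symS 0 (n+1)).card = 0 := by
  rw [← main_count]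
  refine Finset.sum_eq_zero fun π _ => ?_
  exact Nat.choose_eq_zero_of_lt (by omega)

lemma Lp_bounds (n K : ℕ) (hK : 1 ≤ K) (l : ℝ) (hl : 0 < l) :
    Real.exp (-l) * ((1 - Real.exp (-l))/l)^(n+2) ≤ Lp n l ∧
    Lp n l ≤ ((1 - Real.exp (-l))/l)^(n+2) *
      (Real.exp (1/(K:ℝ)^2) * Real.exp l + l * (K * (n+1)) * ((K+1) * Real.exp 1 * l)^(n+1)) := by
  set m := n + 1 with hm
  set t := Real.exp (-l) with ht
  have ht0 : 0 < t := Real.exp_pos _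
  have ht1 : t < 1 := by rw [ht, Real.exp_lt_one_iff]; linarith
  have hsum := hasSum_gen n t ht0 ht1
  have hT := tN_pos m
  have hfac : (0:ℝ) < m.factorial := by positivity
  have htR : ∀ R : ℕ, t^R = Real.exp (-(l*R)) := by
    intro R; rw [ht, ← Real.exp_nat_mul]; congr 1; ring
  -- normalised
  set b : ℕ → ℝ := fun R => (m.factorial : ℝ) / tN m * (((symS R m).card : ℝ) * t^R) with hb
  set g : ℕ → ℝ := fun R => (R:ℝ)^m * Real.exp (-(l*R)) with hg
  have hLp : Lp n l * m.factorial / (1 - t)^(n+2) = (m.factorial : ℝ) / tN m * (∑ π ∈ involutions (n+1), t^(descents π + 1) / (1 - t)^(n+2)) := by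
    unfold Lp
    rw [card_inv, ← Finset.sum_div]
    have : ∀ π : Equiv.Perm (Fin (n+1)), t^(descents π + 1) = Real.exp (-(l * (descents π + 1))) := by
      intro π; rw [htR]; push_cast; rfl
    simp only [this]
    ring
  have hbsum : HasSum b (Lp n l * m.factorial / (1 - t)^(n+2)) := by
    rw [hLp]; exact hsum.mul_left _
  have hcard : ∀ R : ℕ, 1 ≤ R → b R = aN R m / tN m * g R := by
    intro R hR
    have : (R:ℝ) ≠ 0 := by positivity
    simp only [hb, hg, aN, htR]
    field_simp
  have hb0 : b 0 = 0 := by simp only [hb, hm, card_symS_zero]; simp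
  have hg0 : ∀ R, 0 ≤ g R := fun R => by positivity
  have hlow : ∀ R, g R ≤ b R := by
    intro R
    rcases Nat.eq_zero_or_pos R with h | h
    · subst h; rw [hb0]; simp [hg, hm]
    · rw [hcard R h]
      have : 1 ≤ aN R m / tN m := by rw [one_le_div hT]; exact aN_lower R m h
      nlinarith [hg0 R]
  have hupr : ∀ R, b R ≤ Real.exp (1/(K:ℝ)^2) * g R + (if R ∈ range (K*m) then ((K:ℝ)*m+m)^m else 0) := by
    intro R
    rcases Nat.eq_zero_or_pos R with h | h
    · subst h; rw [hb0]
      have := hg0 0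
      split_ifs <;> positivity
    · rw [hcard R h]
      have h1 : aN R m / tN m ≤ ∏ j ∈ range m, (1 + (j:ℝ) / (R:ℝ)^2) := by
        rw [div_le_iff₀ hT, mul_comm]; exact aN_upper R m h
      have hR0 : (0:ℝ) < R := by exact_mod_cast h
      have hR1 : (1:ℝ) ≤ R := by exact_mod_cast h
      split_ifs with hR
      · have h2 : aN R m / tN m * g R ≤ ((K:ℝ)*m+m)^m := by
          calc aN R m / tN m * g R ≤ (∏ j ∈ range m, (1 + (j:ℝ) / (R:ℝ)^2)) * ((R:ℝ)^m * 1) := by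
                simp only [hg]
                gcongr
                rw [Real.exp_le_one_iff]
                have : 0 ≤ l * R := by positivity
                linarith
            _ = ∏ j ∈ range m, ((1 + (j:ℝ) / (R:ℝ)^2) * R) := by
                rw [Finset.prod_mul_distrib]; simp
            _ ≤ ∏ j ∈ range m, ((K:ℝ)*m+m) := by
                apply Finset.prod_le_prod
                · intro j _; positivity
                · intro j hj
                  have hj' : (j:ℝ) ≤ m := by exact_mod_cast (Finset.mem_range.1 hj).le
                  have hRK : (R:ℝ) ≤ K * m := by exact_mod_cast (Finset.mem_range.1 hR).le
                  have e : (1 + (j:ℝ) / (R:ℝ)^2) * R = R + j / R := by field_simp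
                  rw [e]
                  have : (j:ℝ) / R ≤ j := div_le_self (by positivity) hR1
                  linarith
            _ = _ := by simp
        have : 0 ≤ Real.exp (1/(K:ℝ)^2) * g R := by have := hg0 R; positivity
        linarith
      · rw [add_zero]
        have := hg0 R
        refine mul_le_mul_of_nonneg_right (h1.trans ((prod_le_exp R m).trans ?_)) this
        rw [Real.exp_le_exp]
        have hRK : (K:ℝ) * m ≤ R := by
          have := Finset.mem_range.not.1 hR
          exact_mod_cast not_lt.1 this
        have hK0 : (0:ℝ) < K := by exact_mod_cast hK
        rw [div_le_div_iff₀ (by positivity) (by positivity), one_mul]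
        calc (m:ℝ)^2 * K^2 = (K * m)^2 := by ring
          _ ≤ _ := by gcongr
  obtain ⟨hS1, hS2⟩ := S_bounds m (by omega) l hl
  have hgs : Summable g := summable_g m l hl
  have hB1 : ∑' R, g R ≤ Lp n l * m.factorial / (1 - t)^(n+2) :=
    hasSum_le hlow hgs.hasSum hbsum
  have hB2 : Lp n l * m.factorial / (1 - t)^(n+2) ≤ Real.exp (1/(K:ℝ)^2) * ∑' R, g R + (K * m) * ((K:ℝ)*m+m)^m := by
    have h1 : HasSum (fun R => if R ∈ range (K*m) then ((K:ℝ)*m+m)^m else 0) (∑ R ∈ range (K*m), if R ∈ range (K*m) then ((K:ℝ)*m+m)^m else 0) :=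
      hasSum_sum_of_ne_finset_zero (fun R hR => by rw [if_neg hR])
    have h2 : (∑ R ∈ range (K*m), if R ∈ range (K*m) then ((K:ℝ)*m+m)^m else 0) = (K * m) * ((K:ℝ)*m+m)^m := by
      rw [Finset.sum_congr rfl (fun R hR => if_pos hR)]; simp
    rw [h2] at h1
    exact hasSum_le hupr hbsum ((hgs.hasSum.mul_left _).add h1)
  have h1t : 0 < 1 - t := by linarith
  have hid : Lp n l = (1-t)^(n+2) / m.factorial * (Lp n l * m.factorial / (1 - t)^(n+2)) := by
    field_simp
  constructor
  · rw [hid]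
    calc t * ((1-t)/l)^(n+2) = (1-t)^(n+2) / m.factorial * (t * (m.factorial / l^(m+1))) := by
          rw [div_pow]; field_simp; simp [hm]
      _ ≤ _ := by
          gcongr
          exact hS1.trans hB1
  · rw [hid]
    have h3 : ((m:ℝ)^m) ≤ Real.exp 1 ^ m * m.factorial := by
      have := Real.pow_div_factorial_le_exp (m:ℝ) (by positivity) m
      rw [div_le_iff₀ hfac] at this
      rw [← Real.exp_nat_mul, mul_one]; exact this
    calc (1-t)^(n+2) / m.factorial * (Lp n l * m.factorial / (1 - t)^(n+2))
        ≤ (1-t)^(n+2) / m.factorial * (Real.exp (1/(K:ℝ)^2) * (Real.exp l * (m.factorial / l^(m+1))) + (K * m) * ((K+1)^m * (Real.exp 1 ^ m * m.factorial))) := by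
          gcongr
          refine hB2.trans ?_
          gcongr
          calc ((K:ℝ)*m+m)^m = (K+1)^m * (m:ℝ)^m := by rw [← mul_pow]; ring
            _ ≤ _ := by gcongr
      _ = _ := by
          rw [div_pow, mul_pow, mul_pow]
          have : (n + 2) = m + 1 := by omega
          rw [this]
          have : (n:ℝ)+1 = m := by simp [hm]
          rw [this]
          field_simp
          ring
end Lap

section LapLim
open Finset Filter Topology

noncomputable def phiF (l : ℝ) : ℝ := (Real.exp (l/2) - Real.exp (-(l/2))) / l

lemma phiF_bound (l : ℝ) (hl : 0 < l) (hl1 : l ≤ 1) : |phiF l - 1 - l^2/24| ≤ l^3 := by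
  have h1 := Real.exp_bound (x := l/2) (by rw [abs_of_pos (by linarith)]; linarith) (n := 4) (by norm_num)
  have h2 := Real.exp_bound (x := -(l/2)) (by rw [abs_neg, abs_of_pos (by linarith)]; linarith) (n := 4) (by norm_num)
  rw [abs_neg] at h2
  rw [abs_of_pos (show 0 < l/2 by linarith)] at h1 h2
  simp only [Finset.sum_range_succ, Finset.sum_range_zero, Nat.factorial] at h1 h2
  norm_num at h1 h2
  rw [abs_le] at h1 h2
  have e : phiF l - 1 - l^2/24 = (Real.exp (l/2) - Real.exp (-(l/2)) - l - l^3/24) / l := by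
    unfold phiF; field_simp
  rw [e, abs_div, abs_of_pos hl, div_le_iff₀ hl, abs_le]
  have h4 : 0 < l^4 := by positivity
  constructor <;> ring_nf at h1 h2 ⊢ <;> linarith [h1.1, h1.2, h2.1, h2.2]

lemma lam_zero (lam : ℕ → ℝ) (c : ℝ)
    (hc : Tendsto (fun n : ℕ => lam n^2 * ((n:ℝ)+1)) atTop (𝓝 c)) : Tendsto lam atTop (𝓝 0) := by
  have h1 : Tendsto (fun n : ℕ => lam n^2) atTop (𝓝 0) := by
    have h2 := hc.mul (tendsto_one_div_add_atTop_nhds_zero_nat (𝕜 := ℝ))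
    rw [mul_zero] at h2
    refine h2.congr fun n => ?_
    have : (n:ℝ)+1 ≠ 0 := by positivity
    field_simp
  have h3 := (Real.continuous_sqrt.tendsto 0).comp h1
  rw [Real.sqrt_zero] at h3
  refine (tendsto_zero_iff_abs_tendsto_zero _).2 (h3.congr fun n => ?_)
  simp [Real.sqrt_sq_eq_abs]

lemma phi_pow_lim (lam : ℕ → ℝ) (c : ℝ) (hpos : ∀ᶠ n in atTop, 0 < lam n)
    (hc : Tendsto (fun n : ℕ => lam n^2 * ((n:ℝ)+1)) atTop (𝓝 c)) :
    Tendsto (fun n => phiF (lam n)^(n+2)) atTop (𝓝 (Real.exp (c/24))) := by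
  have h0 := lam_zero lam c hc
  have hle : ∀ᶠ n in atTop, lam n ≤ 1 := h0.eventually_le_const one_pos
  have hc' : Tendsto (fun n : ℕ => lam n^2 * (n:ℝ)) atTop (𝓝 c) := by
    have := hc.sub (h0.pow 2)
    simp only [ne_eq, OfNat.ofNat_ne_zero, not_false_eq_true, zero_pow, sub_zero] at this
    refine this.congr fun n => by ring
  have hE : Tendsto (fun n : ℕ => (n:ℝ) * (phiF (lam n) - 1 - (lam n)^2/24)) atTop (𝓝 0) := by
    have h5 : Tendsto (fun n : ℕ => lam n^2 * (n:ℝ) * lam n) atTop (𝓝 0) := by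
      have := hc'.mul h0
      rwa [mul_zero] at this
    refine squeeze_zero_norm' ?_ h5
    filter_upwards [hpos, hle] with n h1 h2
    rw [Real.norm_eq_abs, abs_mul, abs_of_nonneg (Nat.cast_nonneg n)]
    have := phiF_bound _ h1 h2
    calc _ ≤ (n:ℝ) * lam n^3 := by gcongr
      _ = _ := by ring
  have hg : Tendsto (fun n : ℕ => (n:ℝ) * (phiF (lam n) - 1)) atTop (𝓝 (c/24)) := by
    have := hE.add (hc'.div_const 24)
    rw [zero_add] at this
    refine this.congr fun n => by ring
  have h1 : Tendsto (fun n : ℕ => phiF (lam n)) atTop (𝓝 1) := by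
    have h6 : Tendsto (fun n : ℕ => phiF (lam n) - 1 - (lam n)^2/24) atTop (𝓝 0) := by
      have := h0.pow 3
      simp only [ne_eq, OfNat.ofNat_ne_zero, not_false_eq_true, zero_pow] at this
      refine squeeze_zero_norm' ?_ this
      filter_upwards [hpos, hle] with n h1 h2
      exact phiF_bound _ h1 h2
    have h7 := (h6.add ((h0.pow 2).div_const 24)).add_const 1
    simp only [ne_eq, OfNat.ofNat_ne_zero, not_false_eq_true, zero_pow, zero_div, zero_add] at h7
    refine h7.congr fun n => by ring
  have h2 := (Real.tendsto_one_add_pow_exp_of_tendsto hg).mul (h1.pow 2)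
  rw [one_pow, mul_one] at h2
  refine h2.congr fun n => ?_
  rw [pow_add]; ring

lemma lap_lim (lam : ℕ → ℝ) (c : ℝ) (hpos : ∀ᶠ n in atTop, 0 < lam n)
    (hc : Tendsto (fun n : ℕ => lam n^2 * ((n:ℝ)+1)) atTop (𝓝 c)) :
    Tendsto (fun n : ℕ => (∑ π ∈ involutions (n+1), Real.exp (-(lam n * ((descents π : ℝ) - n/2)))) /
      (involutions (n+1)).card) atTop (𝓝 (Real.exp (c/24))) := by
  have h0 := lam_zero lam c hc
  have hφ := phi_pow_lim lam c hpos hc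
  have hphipos : ∀ l : ℝ, 0 < l → 0 < phiF l := by
    intro l hl
    refine div_pos ?_ hl
    rw [sub_pos, Real.exp_lt_exp]; linarith
  have hid : ∀ n : ℕ, (∑ π ∈ involutions (n+1), Real.exp (-(lam n * ((descents π : ℝ) - n/2)))) /
      (involutions (n+1)).card = Real.exp (lam n * (n+2)/2) * Lp n (lam n) := by
    intro n
    unfold Lp
    rw [← mul_div_assoc, Finset.mul_sum]
    congr 1
    refine Finset.sum_congr rfl fun π _ => ?_
    rw [← Real.exp_add]; congr 1; ring
  have hid2 : ∀ (n : ℕ) (l : ℝ), Real.exp (l * (n+2)/2) * ((1 - Real.exp (-l))/l)^(n+2) = phiF l^(n+2) := by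
    intro n l
    have : Real.exp (l * (n+2)/2) = (Real.exp (l/2))^(n+2) := by
      rw [← Real.exp_nat_mul]; congr 1; push_cast; ring
    rw [this, ← mul_pow]
    congr 1
    unfold phiF
    rw [← mul_div_assoc, mul_sub, ← Real.exp_add, mul_one]
    congr 4; ring
  simp only [hid]
  have hlow : ∀ᶠ n in atTop, Real.exp (-(lam n)) * phiF (lam n)^(n+2) ≤ Real.exp (lam n * (n+2)/2) * Lp n (lam n) := by
    filter_upwards [hpos] with n hn
    rw [← hid2]
    have := (Lp_bounds n 1 le_rfl (lam n) hn).1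
    have h2 := mul_le_mul_of_nonneg_left this (Real.exp_pos (lam n * (n+2)/2)).le
    linarith
  have hup : ∀ K : ℕ, 1 ≤ K → ∀ᶠ n in atTop, Real.exp (lam n * (n+2)/2) * Lp n (lam n) ≤
      phiF (lam n)^(n+2) * (Real.exp (1/(K:ℝ)^2) * Real.exp (lam n) + (K * ((n+1:ℕ):ℝ)) * (1/2)^(n+1)) := by
    intro K hK
    have h1 : ∀ᶠ n in atTop, lam n ≤ 1 := h0.eventually_le_const one_pos
    have h2 : ∀ᶠ n in atTop, (K+1) * Real.exp 1 * lam n ≤ 1/2 := by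
      have := h0.const_mul ((K+1) * Real.exp 1)
      rw [mul_zero] at this
      exact this.eventually_le_const (by norm_num)
    filter_upwards [hpos, h1, h2] with n hn hn1 hn2
    have := (Lp_bounds n K hK (lam n) hn).2
    have h2 := mul_le_mul_of_nonneg_left this (Real.exp_pos (lam n * (n+2)/2)).le
    rw [← mul_assoc, hid2] at h2
    refine h2.trans ?_
    have := hphipos _ hn
    have h5 : lam n * (K * ((n:ℝ)+1)) ≤ K * ((n+1:ℕ):ℝ) := by
      push_cast
      calc lam n * (K * (n+1)) ≤ 1 * (K * ((n:ℝ)+1)) := by gcongr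
        _ = _ := one_mul _
    have h6 : ((K+1) * Real.exp 1 * lam n)^(n+1) ≤ (1/2:ℝ)^(n+1) := by gcongr
    have h7 := mul_le_mul h5 h6 (by positivity) (by positivity)
    exact mul_le_mul_of_nonneg_left (by linarith) (by positivity)
  have hA : Tendsto (fun n => Real.exp (-(lam n)) * phiF (lam n)^(n+2)) atTop (𝓝 (Real.exp (c/24))) := by
    have h1 : Tendsto (fun n => Real.exp (-(lam n))) atTop (𝓝 1) := by
      have := (Real.continuous_exp.tendsto' (-0) 1 (by simp)).comp h0.neg
      exact this
    simpa using h1.mul hφ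
  have hB : ∀ K : ℕ, Tendsto (fun n : ℕ => phiF (lam n)^(n+2) * (Real.exp (1/(K:ℝ)^2) * Real.exp (lam n) + (K * ((n+1:ℕ):ℝ)) * (1/2)^(n+1))) atTop
      (𝓝 (Real.exp (c/24) * Real.exp (1/(K:ℝ)^2))) := by
    intro K
    have h1 : Tendsto (fun n => Real.exp (lam n)) atTop (𝓝 1) := by
      have := (Real.continuous_exp.tendsto' 0 1 Real.exp_zero).comp h0
      exact this
    have h2 : Tendsto (fun n : ℕ => (n:ℝ) * (1/2:ℝ)^n) atTop (𝓝 0) :=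
      tendsto_self_mul_const_pow_of_lt_one (by norm_num) (by norm_num)
    have h3 := ((tendsto_add_atTop_iff_nat 1).2 h2).const_mul (K:ℝ)
    have h4 := hφ.mul ((h1.const_mul (Real.exp (1/(K:ℝ)^2))).add h3)
    rw [mul_one, mul_zero, add_zero] at h4
    refine h4.congr fun n => ?_
    ring
  have hC : Tendsto (fun K : ℕ => Real.exp (c/24) * Real.exp (1/(K:ℝ)^2)) atTop (𝓝 (Real.exp (c/24))) := by
    have h1 : Tendsto (fun K : ℕ => 1/(K:ℝ)^2) atTop (𝓝 0) := by
      have := (tendsto_one_div_atTop_nhds_zero_nat (𝕜 := ℝ)).pow 2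
      simp only [ne_eq, OfNat.ofNat_ne_zero, not_false_eq_true, zero_pow] at this
      refine this.congr fun n => by rw [div_pow, one_pow]
    have h2 := ((Real.continuous_exp.tendsto _).comp h1).const_mul (Real.exp (c/24))
    simpa using h2
  rw [tendsto_order]
  constructor
  · intro a ha
    filter_upwards [hlow, hA.eventually_const_lt ha] with n h1 h2
    exact h2.trans_le h1
  · intro b hb
    obtain ⟨K, hK, hK1⟩ := ((hC.eventually_lt_const hb).and (eventually_ge_atTop 1)).exists
    filter_upwards [hup K hK1, (hB K).eventually_lt_const hK] with n h1 h2
    exact h1.trans_lt h2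
end LapLim

section ProbLim
open MeasureTheory ProbabilityTheory Filter Topology

lemma gauss_unique (μ : Measure ℝ) [IsProbabilityMeasure μ]
    (hi : ∀ s : ℝ, 0 < s → Integrable (fun x => Real.exp (-(s*x))) μ)
    (hv : ∀ s : ℝ, 0 < s → ∫ x, Real.exp (-(s*x)) ∂μ = Real.exp (s^2/2)) :
    μ = gaussianReal 0 1 := by
  have hsub : Set.Iio (0:ℝ) ⊆ interior (integrableExpSet id μ) := by
    rw [isOpen_Iio.subset_interior_iff]
    intro t ht
    have := hi (-t) (by simpa using ht)
    simpa [integrableExpSet] using this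
  have hA : AnalyticOnNhd ℂ (complexMGF id μ) {z | z.re < 0} :=
    analyticOnNhd_complexMGF.mono (fun z hz => hsub hz)
  have hB : AnalyticOnNhd ℂ (fun z : ℂ => Complex.exp (z^2/2)) {z | z.re < 0} := by
    intro z _
    fun_prop
  have hconn : IsPreconnected {z : ℂ | z.re < 0} := (convex_halfSpace_re_lt 0).isPreconnected
  have hreal : ∀ t : ℝ, t < 0 → complexMGF id μ (t:ℂ) = Complex.exp ((t:ℂ)^2/2) := by
    intro t ht
    rw [complexMGF_ofReal]
    have h1 : mgf id μ t = Real.exp (t^2/2) := by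
      have := hv (-t) (by linarith)
      simpa [mgf] using this
    rw [h1]; push_cast; rfl
  have hEq : Set.EqOn (complexMGF id μ) (fun z : ℂ => Complex.exp (z^2/2)) {z | z.re < 0} := by
    refine hA.eqOn_of_preconnected_of_frequently_eq hB hconn (z₀ := ((-1:ℝ):ℂ)) (by simp) ?_
    have hT : Tendsto (fun t : ℝ => (t:ℂ)) (𝓝[≠] (-1)) (𝓝[≠] ((-1:ℝ):ℂ)) := by
      refine tendsto_nhdsWithin_iff.2 ⟨(Complex.continuous_ofReal.tendsto _).mono_left nhdsWithin_le_nhds, ?_⟩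
      filter_upwards [self_mem_nhdsWithin] with t ht
      intro h
      exact ht (Complex.ofReal_injective h)
    refine hT.frequently (Eventually.frequently ?_)
    have : ∀ᶠ t : ℝ in 𝓝[≠] (-1), t < 0 :=
      nhdsWithin_le_nhds (Iio_mem_nhds (by norm_num))
    filter_upwards [this] with t ht
    exact hreal t ht
  apply Measure.ext_of_charFun
  funext t
  rw [charFun_gaussianReal]
  set z : ℕ → ℂ := fun n => ((-(1/((n:ℝ)+1)) : ℝ) : ℂ) + t * Complex.I with hz
  have hzre : ∀ n, (z n).re = -(1/((n:ℝ)+1)) := by intro n; simp only [hz]; rw [Complex.add_re, Complex.ofReal_re]; simp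
  have hz0 : Tendsto z atTop (𝓝 (t * Complex.I)) := by
    have h1 := (tendsto_one_div_add_atTop_nhds_zero_nat (𝕜 := ℝ)).neg
    have h2 := ((Complex.continuous_ofReal.tendsto _).comp h1).add_const (t * Complex.I)
    rw [neg_zero, Complex.ofReal_zero, zero_add] at h2
    exact h2
  have hlim1 : Tendsto (fun n => complexMGF id μ (z n)) atTop (𝓝 (charFun μ t)) := by
    rw [← complexMGF_id_mul_I]
    unfold complexMGF
    refine tendsto_integral_of_dominated_convergence (fun x => 1 + Real.exp (-(1*x))) ?_ ?_ ?_ ?_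
    · intro n; exact (by fun_prop : Continuous fun x : ℝ => Complex.exp (z n * ((id x : ℝ):ℂ))).aestronglyMeasurable
    · exact (integrable_const _).add (hi 1 one_pos)
    · intro n
      refine Eventually.of_forall fun x => ?_
      rw [Complex.norm_exp]
      have : (z n * ((id x : ℝ):ℂ)).re = -(1/((n:ℝ)+1)) * x := by
        rw [Complex.re_mul_ofReal, hzre]; rfl
      rw [this]
      have hn : 0 < 1/((n:ℝ)+1) := by positivity
      have hn1 : 1/((n:ℝ)+1) ≤ 1 := by
        rw [div_le_one (by positivity)]; linarith [(Nat.cast_nonneg n : (0:ℝ) ≤ n)]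
      rcases le_total 0 x with hx | hx
      · have : Real.exp (-(1/((n:ℝ)+1)) * x) ≤ 1 := by
          rw [Real.exp_le_one_iff]; nlinarith
        linarith [Real.exp_pos (-(1*x))]
      · have : Real.exp (-(1/((n:ℝ)+1)) * x) ≤ Real.exp (-(1*x)) := by
          rw [Real.exp_le_exp]; nlinarith
        linarith
    · refine Eventually.of_forall fun x => ?_
      exact (Complex.continuous_exp.tendsto _).comp (hz0.mul_const _)
  have hlim2 : Tendsto (fun n => complexMGF id μ (z n)) atTop (𝓝 (Complex.exp ((t*Complex.I)^2/2))) := by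
    have h1 : ∀ n, complexMGF id μ (z n) = Complex.exp ((z n)^2/2) := by
      intro n
      refine hEq ?_
      show (z n).re < 0
      rw [hzre]
      have hn : 0 < 1/((n:ℝ)+1) := by positivity
      linarith
    simp only [h1]
    exact ((by fun_prop : Continuous fun z : ℂ => Complex.exp (z^2/2)).tendsto _).comp hz0
  rw [tendsto_nhds_unique hlim1 hlim2]
  congr 1
  rw [mul_pow, Complex.I_sq]
  simp
  ring

lemma laplace_of_weak (μs : ℕ → ProbabilityMeasure ℝ) (μ : ProbabilityMeasure ℝ)
    (hw : Tendsto μs atTop (𝓝 μ))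
    (hi : ∀ s : ℝ, 0 < s → ∀ n, Integrable (fun x => Real.exp (-(s*x))) (μs n : Measure ℝ))
    (hv : ∀ s : ℝ, 0 < s → Tendsto (fun n => ∫ x, Real.exp (-(s*x)) ∂(μs n : Measure ℝ)) atTop (𝓝 (Real.exp (s^2/2))))
    (s : ℝ) (hs : 0 < s) :
    Integrable (fun x => Real.exp (-(s*x))) (μ : Measure ℝ) ∧
      ∫ x, Real.exp (-(s*x)) ∂(μ : Measure ℝ) = Real.exp (s^2/2) := by
  set f : ℕ → BoundedContinuousFunction ℝ ℝ := fun K =>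
    BoundedContinuousFunction.ofNormedAddCommGroup (fun x => min (Real.exp (-(s*x))) ((K:ℝ)+1))
      (by fun_prop) ((K:ℝ)+1) (by
        intro x
        rw [Real.norm_eq_abs, abs_of_nonneg (le_min (Real.exp_pos _).le (by positivity))]
        exact min_le_right _ _) with hf
  have hfx : ∀ K x, f K x = min (Real.exp (-(s*x))) ((K:ℝ)+1) := fun K x => rfl
  rw [ProbabilityMeasure.tendsto_iff_forall_integral_tendsto] at hw
  have hup : ∀ K, ∫ x, f K x ∂(μ : Measure ℝ) ≤ Real.exp (s^2/2) := by
    intro K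
    refine le_of_tendsto_of_tendsto' (hw (f K)) (hv s hs) fun n => ?_
    refine integral_mono ((f K).integrable _) (hi s hs n) fun x => ?_
    rw [hfx]; exact min_le_left _ _
  have hlow : ∀ K : ℕ, Real.exp (s^2/2) - Real.exp ((2*s)^2/2) / ((K:ℝ)+1) ≤ ∫ x, f K x ∂(μ : Measure ℝ) := by
    intro K
    have h1 := (hv s hs).sub ((hv (2*s) (by linarith)).div_const ((K:ℝ)+1))
    refine le_of_tendsto_of_tendsto' h1 (hw (f K)) fun n => ?_
    rw [← integral_div, ← integral_sub (hi s hs n) ((hi (2*s) (by linarith) n).div_const _)]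
    refine integral_mono ((hi s hs n).sub ((hi (2*s) (by linarith) n).div_const _)) ((f K).integrable _) fun x => ?_
    simp only [hfx]
    have e : Real.exp (-(2*s*x)) = Real.exp (-(s*x)) * Real.exp (-(s*x)) := by
      rw [← Real.exp_add]; congr 1; ring
    rw [e]
    have hp := Real.exp_pos (-(s*x))
    set y := Real.exp (-(s*x))
    have hK : (0:ℝ) < (K:ℝ)+1 := by positivity
    refine le_min ?_ ?_
    · have : 0 ≤ y*y/((K:ℝ)+1) := by positivity
      linarith
    · rw [sub_le_iff_le_add, ← sub_le_iff_le_add', le_div_iff₀ hK]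
      nlinarith [sq_nonneg (y - ((K:ℝ)+1))]
  have hlim : Tendsto (fun K => ∫ x, f K x ∂(μ : Measure ℝ)) atTop (𝓝 (Real.exp (s^2/2))) := by
    refine tendsto_of_tendsto_of_tendsto_of_le_of_le ?_ tendsto_const_nhds hlow hup
    have := ((tendsto_one_div_add_atTop_nhds_zero_nat (𝕜 := ℝ)).const_mul (Real.exp ((2*s)^2/2))).const_sub (Real.exp (s^2/2))
    rw [mul_zero, sub_zero] at this
    refine this.congr fun K => by ring
  have hf0 : ∀ K x, 0 ≤ f K x := fun K x => by rw [hfx]; exact le_min (Real.exp_pos _).le (by positivity)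
  have hl : ∫⁻ x, ENNReal.ofReal (Real.exp (-(s*x))) ∂(μ : Measure ℝ) = ENNReal.ofReal (Real.exp (s^2/2)) := by
    have h1 : Tendsto (fun K => ∫⁻ x, ENNReal.ofReal (f K x) ∂(μ : Measure ℝ)) atTop
        (𝓝 (∫⁻ x, ENNReal.ofReal (Real.exp (-(s*x))) ∂(μ : Measure ℝ))) := by
      refine lintegral_tendsto_of_tendsto_of_monotone ?_ ?_ ?_
      · intro K
        exact (f K).continuous.measurable.ennreal_ofReal.aemeasurable
      · refine Eventually.of_forall fun x => ?_
        intro K L hKL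
        refine ENNReal.ofReal_le_ofReal ?_
        rw [hfx, hfx]
        have : (K:ℝ) ≤ L := by exact_mod_cast hKL
        exact min_le_min_left _ (by linarith)
      · refine Eventually.of_forall fun x => ?_
        refine tendsto_const_nhds.congr' ?_
        filter_upwards [tendsto_natCast_atTop_atTop.eventually_ge_atTop (Real.exp (-(s*x)))] with K hK
        rw [hfx, min_eq_left (by linarith)]
    have h2 : ∀ K, ∫⁻ x, ENNReal.ofReal (f K x) ∂(μ : Measure ℝ) = ENNReal.ofReal (∫ x, f K x ∂(μ : Measure ℝ)) := by
      intro K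
      rw [ofReal_integral_eq_lintegral_ofReal ((f K).integrable _) (Eventually.of_forall (hf0 K))]
    simp only [h2] at h1
    exact tendsto_nhds_unique h1 ((ENNReal.continuous_ofReal.tendsto _).comp hlim)
  have hm : AEStronglyMeasurable (fun x : ℝ => Real.exp (-(s*x))) (μ : Measure ℝ) :=
    (by fun_prop : Continuous fun x : ℝ => Real.exp (-(s*x))).aestronglyMeasurable
  have hp : 0 ≤ᵐ[(μ : Measure ℝ)] fun x : ℝ => Real.exp (-(s*x)) :=
    Eventually.of_forall fun x => (Real.exp_pos _).le
  constructor
  · rw [← lintegral_ofReal_ne_top_iff_integrable hm hp, hl]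
    exact ENNReal.ofReal_ne_top
  · rw [integral_eq_lintegral_of_nonneg_ae hp hm, hl, ENNReal.toReal_ofReal (Real.exp_pos _).le]

noncomputable def stdG : ProbabilityMeasure ℝ := ⟨gaussianReal 0 1, inferInstance⟩

lemma weak_lim (μs : ℕ → ProbabilityMeasure ℝ)
    (h2 : ∀ n, ∫⁻ x, ENNReal.ofReal (x^2) ∂(μs n : Measure ℝ) ≤ 1)
    (hi : ∀ s : ℝ, 0 < s → ∀ n, Integrable (fun x => Real.exp (-(s*x))) (μs n : Measure ℝ))
    (hv : ∀ s : ℝ, 0 < s → Tendsto (fun n => ∫ x, Real.exp (-(s*x)) ∂(μs n : Measure ℝ)) atTop (𝓝 (Real.exp (s^2/2)))) :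
    Tendsto μs atTop (𝓝 stdG) := by
  have htight : IsTightMeasureSet {x : Measure ℝ | ∃ μ ∈ Set.range μs, (μ : Measure ℝ) = x} := by
    rw [isTightMeasureSet_iff_exists_isCompact_measure_compl_le]
    intro ε hε
    have hT : Tendsto (fun r : ℕ => (1:ENNReal) / ENNReal.ofReal ((r:ℝ)^2)) atTop (𝓝 0) := by
      have h1 : Tendsto (fun r : ℕ => ENNReal.ofReal ((r:ℝ)^2)) atTop (𝓝 ⊤) := by
        refine ENNReal.tendsto_ofReal_atTop.comp ?_
        exact (tendsto_pow_atTop (by norm_num)).comp tendsto_natCast_atTop_atTop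
      have := tendsto_inv_iff.2 h1
      simpa [one_div] using this
    obtain ⟨r, hr, hr1⟩ := ((hT.eventually_le_const hε).and (eventually_ge_atTop 1)).exists
    have hr0 : (1:ℝ) ≤ r := by exact_mod_cast hr1
    refine ⟨Metric.closedBall 0 r, isCompact_closedBall _ _, ?_⟩
    rintro _ ⟨_, ⟨n, rfl⟩, rfl⟩
    refine le_trans ?_ hr
    have hne : ENNReal.ofReal ((r:ℝ)^2) ≠ 0 := by
      rw [ne_eq, ENNReal.ofReal_eq_zero, not_le]; positivity
    have h3 := meas_ge_le_lintegral_div (μ := (μs n : Measure ℝ)) (f := fun x : ℝ => ENNReal.ofReal (x^2))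
      (by fun_prop) hne ENNReal.ofReal_ne_top
    refine (measure_mono ?_).trans (h3.trans (ENNReal.div_le_div_right (h2 n) _))
    intro x hx
    simp only [Set.mem_compl_iff, Metric.mem_closedBall, dist_zero_right, not_le, Real.norm_eq_abs] at hx
    refine ENNReal.ofReal_le_ofReal ?_
    rw [← sq_abs x]
    gcongr
  have hcomp := isCompact_closure_of_isTightMeasureSet htight
  refine tendsto_of_subseq_tendsto fun ns hns => ?_
  obtain ⟨μ, _, φ, hφ, hlim⟩ := hcomp.tendsto_subseq (x := fun k => μs (ns k))
    (fun k => subset_closure ⟨_, rfl⟩)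
  refine ⟨φ, ?_⟩
  have hkey := laplace_of_weak (fun k => μs (ns (φ k))) μ hlim (fun s hs k => hi s hs _)
    (fun s hs => (hv s hs).comp (hns.comp hφ.tendsto_atTop))
  have : μ = stdG := by
    apply Subtype.ext
    exact gauss_unique (μ : Measure ℝ) (fun s hs => (hkey s hs).1) (fun s hs => (hkey s hs).2)
  rw [← this]
  exact hlim
end ProbLim

section Fin
open MeasureTheory ProbabilityTheory Filter Topology

noncomputable def Xst (n : ℕ) (π : Equiv.Perm (Fin (n+1))) : ℝ :=
  ((descents π : ℝ) - invMean (n+1)) / Real.sqrt (invVar (n+1))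

noncomputable def muS (n : ℕ) : Measure ℝ :=
  (((involutions (n+1)).card : ENNReal))⁻¹ • ∑ π ∈ involutions (n+1), Measure.dirac (Xst n π)

lemma card_inv_pos (n : ℕ) : 0 < (involutions (n+1)).card :=
  Finset.card_pos.2 ⟨1, by simp [involutions]⟩

lemma muS_integrable (n : ℕ) (f : ℝ → ℝ) : Integrable f (muS n) := by
  unfold muS
  refine Integrable.smul_measure ?_ ?_
  · rw [integrable_finsetSum_measure]
    intro π _
    exact integrable_dirac (by simp)
  · simp [(card_inv_pos n).ne']

lemma muS_integral (n : ℕ) (f : ℝ → ℝ) :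
    ∫ x, f x ∂(muS n) = (∑ π ∈ involutions (n+1), f (Xst n π)) / (involutions (n+1)).card := by
  unfold muS
  rw [integral_smul_measure, integral_finsetSum_measure (fun π _ => integrable_dirac (by simp))]
  simp only [integral_dirac]
  rw [ENNReal.toReal_inv, ENNReal.toReal_natCast, smul_eq_mul]
  ring

instance muS_prob (n : ℕ) : IsProbabilityMeasure (muS n) := by
  constructor
  unfold muS
  simp only [Measure.smul_apply, Measure.coe_finsetSum, Finset.sum_apply, measure_univ, Finset.sum_const,
    nsmul_eq_mul, mul_one, smul_eq_mul]
  exact ENNReal.inv_mul_cancel (by exact_mod_cast (card_inv_pos n).ne') (by simp)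

lemma muS_cdf (n : ℕ) (x : ℝ) : (muS n).real (Set.Iic x) = invCDF (n+1) x := by
  rw [← integral_indicator_one measurableSet_Iic, muS_integral]
  unfold invCDF
  congr 1
  rw [Finset.card_filter]
  push_cast
  refine Finset.sum_congr rfl fun π _ => ?_
  simp only [Set.indicator, Set.mem_Iic, Pi.one_apply]
  rfl

lemma muS_second (n : ℕ) : ∫⁻ x, ENNReal.ofReal (x^2) ∂(muS n) ≤ 1 := by
  rw [← ofReal_integral_eq_lintegral_ofReal (muS_integrable n _) (Eventually.of_forall fun x => sq_nonneg x),
    muS_integral]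
  rw [← ENNReal.ofReal_one]
  refine ENNReal.ofReal_le_ofReal ?_
  have hv : 0 ≤ invVar (n+1) := by unfold invVar; positivity
  have : (∑ π ∈ involutions (n+1), Xst n π^2) / (involutions (n+1)).card = invVar (n+1) / invVar (n+1) := by
    unfold Xst
    simp only [div_pow, Real.sq_sqrt hv]
    rw [← Finset.sum_div, div_right_comm]
    conv_rhs => arg 1; unfold invVar
  rw [this]
  exact div_self_le_one _

lemma muS_laplace (s : ℝ) (hs : 0 < s) :
    Tendsto (fun n => ∫ x, Real.exp (-(s*x)) ∂(muS n)) atTop (𝓝 (Real.exp (s^2/2))) := by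
  have hvpos : ∀ᶠ n : ℕ in atTop, 0 < invVar (n+1) := by
    filter_upwards [eventually_ge_atTop 1] with n hn
    have := (invVar_bound n hn).1
    have h2 : 0 < ((n:ℝ)+2)/12 := by positivity
    linarith
  have hv : Tendsto (fun n : ℕ => invVar (n+1) / ((n:ℝ)+1)) atTop (𝓝 (1/12)) := by
    have h1 := tendsto_one_div_add_atTop_nhds_zero_nat (𝕜 := ℝ)
    have hA : Tendsto (fun n : ℕ => 1/12 + 1/12 * (1/((n:ℝ)+1))) atTop (𝓝 (1/12)) := by
      simpa using (h1.const_mul (1/12:ℝ)).const_add (1/12:ℝ)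
    have hB : Tendsto (fun n : ℕ => 1/12 + (1/12+8) * (1/((n:ℝ)+1))) atTop (𝓝 (1/12)) := by
      simpa using (h1.const_mul (1/12+8:ℝ)).const_add (1/12:ℝ)
    refine tendsto_of_tendsto_of_tendsto_of_le_of_le' hA hB ?_ ?_
    · filter_upwards [eventually_ge_atTop 1] with n hn
      have := (invVar_bound n hn).1
      have hp : 0 < (n:ℝ)+1 := by positivity
      rw [le_div_iff₀ hp]
      refine le_trans (le_of_eq ?_) this
      field_simp
      ring
    · filter_upwards [eventually_ge_atTop 1] with n hn
      have := (invVar_bound n hn).2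
      have hp : 0 < (n:ℝ)+1 := by positivity
      rw [div_le_iff₀ hp]
      refine le_trans this (le_of_eq ?_)
      field_simp
      ring
  have h := lap_lim (fun n => s / Real.sqrt (invVar (n+1))) (12*s^2) ?_ ?_
  · have e : 12*s^2/24 = s^2/2 := by ring
    rw [e] at h
    refine h.congr fun n => ?_
    rw [muS_integral]
    congr 1
    refine Finset.sum_congr rfl fun π _ => ?_
    unfold Xst
    rw [invMean_eq]
    congr 2
    ring
  · filter_upwards [hvpos] with n hn
    positivity
  · have h2 := (hv.inv₀ (by norm_num)).const_mul (s^2)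
    have e : s^2 * (1/12:ℝ)⁻¹ = 12*s^2 := by norm_num; ring
    rw [e] at h2
    refine h2.congr' ?_
    filter_upwards [hvpos] with n hn
    rw [div_pow, Real.sq_sqrt hn.le, inv_div]
    ring

lemma std_cdf (x : ℝ) : (gaussianReal 0 1).real (Set.Iic x) = stdNormalCDF x := by
  rw [measureReal_def, gaussianReal_apply_eq_integral _ one_ne_zero,
    ENNReal.toReal_ofReal (integral_nonneg fun y => gaussianPDFReal_nonneg _ _ _)]
  unfold stdNormalCDF
  rw [← integral_const_mul]
  congr 1
  funext y
  simp [gaussianPDFReal]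

lemma final_lim (x : ℝ) : Tendsto (fun n : ℕ => invCDF n x) atTop (𝓝 (stdNormalCDF x)) := by
  rw [← tendsto_add_atTop_iff_nat 1]
  have hw := weak_lim (fun n => ⟨muS n, muS_prob n⟩) muS_second
    (fun s _ n => muS_integrable n _) muS_laplace
  have h0 : stdG (frontier (Set.Iic x)) = 0 := by
    rw [frontier_Iic]
    have : NullSingletonClass (gaussianReal 0 1) := nullSingletonClass_gaussianReal one_ne_zero
    rw [ProbabilityMeasure.null_iff_toMeasure_null]
    exact measure_singleton (μ := gaussianReal 0 1) x
  have h1 := ProbabilityMeasure.tendsto_measure_of_null_frontier_of_tendsto hw h0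
  have h2 := (NNReal.continuous_coe.tendsto _).comp h1
  rw [← std_cdf]
  refine Tendsto.congr (fun n => ?_) h2
  rw [← muS_cdf]; rfl
end Fin


/-- The number of descents in random involutions is asymptotically normal. -/
theorem descents_involutions_asymptotically_normal (x : ℝ) :
    Filter.Tendsto (fun n : ℕ => invCDF n x) Filter.atTop (nhds (stdNormalCDF x)) := by
  exact final_lim x
end
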